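/- arXiv:math/0608375 — 7 statements merged into one kernel-verified Lean document; each statement's English description precedes it below -/
import Mathlib

section
/- For every bounded real sequence x = (x_1, x_2, …) and every k ≥ 1 one has |(H(Tx))_k − (T(Hx))_k| ≤ 2‖x‖_∞/(k+1); consequently the sequence H(Tx) − T(Hx) converges to 0, i.e. H(Tx) − T(Hx) ∈ c₀. -/
open Filter

/-- The shift operator on (1-indexed) sequences: `(T x)_k = x_{k+1}`. -/
def shiftSeq (x : ℕ → ℝ) : ℕ → ℝ := fun k => x (k + 1)

/-- The Cesàro operator on (1-indexed) sequences: `(H x)_k = (x_1 + ⋯ + x_k)/k`. -/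
noncomputable def cesaroSeq (x : ℕ → ℝ) : ℕ → ℝ :=
  fun k => (∑ i ∈ Finset.Icc 1 k, x i) / k

open scoped BigOperators

/-! The commutator is `(H(Tx))_k - (T(Hx))_k = ((H(Tx))_k - x_1)/(k + 1)`: the average of
`x_1, …, x_{k+1}` is a convex combination of `x_1` (weight `1/(k + 1)`) and of the average of
`x_2, …, x_{k+1}`, which is `(H(Tx))_k`. Both `(H(Tx))_k` and `x_1` are bounded by `‖x‖_∞`. -/

theorem sum_Icc_succ_eq_add_sum_Icc {M : Type*} [AddCommMonoid M] (f : ℕ → M) {m n : ℕ}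
    (h : m ≤ n + 1) :
    ∑ i ∈ Finset.Icc m (n + 1), f i = f m + ∑ i ∈ Finset.Icc m n, f (i + 1) := by
  simp only [← Finset.Ico_add_one_right_eq_Icc]
  rw [Finset.sum_Ico_add', Finset.sum_eq_sum_Ico_succ_bot (Nat.lt_add_one_of_le h)]

theorem natCast_mul_cesaroSeq (x : ℕ → ℝ) (k : ℕ) :
    k * cesaroSeq x k = ∑ i ∈ Finset.Icc 1 k, x i :=
  mul_div_cancel_of_imp' fun hk => by simp [Nat.cast_eq_zero.mp hk]

theorem abs_cesaroSeq_le {x : ℕ → ℝ} {C : ℝ} {k : ℕ} (hk : 1 ≤ k)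
    (hx : ∀ i ∈ Finset.Icc 1 k, |x i| ≤ C) : |cesaroSeq x k| ≤ C :=
  calc |cesaroSeq x k| = |𝔼 i ∈ Finset.Icc 1 k, x i| := by
        rw [Finset.expect_eq_sum_div_card, Nat.card_Icc, Nat.add_sub_cancel, cesaroSeq]
    _ ≤ 𝔼 i ∈ Finset.Icc 1 k, |x i| := Finset.abs_expect_le _ _
    _ ≤ C := Finset.expect_le (Finset.nonempty_Icc.mpr hk) hx

theorem shiftSeq_cesaroSeq (x : ℕ → ℝ) (k : ℕ) :
    shiftSeq (cesaroSeq x) k = (x 1 + k * cesaroSeq (shiftSeq x) k) / (k + 1) := by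
  rw [natCast_mul_cesaroSeq, shiftSeq, cesaroSeq, Nat.cast_add_one,
    sum_Icc_succ_eq_add_sum_Icc x (Nat.le_add_left 1 k)]
  rfl

theorem cesaroSeq_shiftSeq_sub_shiftSeq_cesaroSeq (x : ℕ → ℝ) (k : ℕ) :
    cesaroSeq (shiftSeq x) k - shiftSeq (cesaroSeq x) k =
      (cesaroSeq (shiftSeq x) k - x 1) / (k + 1) := by
  rw [shiftSeq_cesaroSeq]
  field_simp
  ring

theorem abs_cesaroSeq_shiftSeq_sub_shiftSeq_cesaroSeq_le {x : ℕ → ℝ} {C : ℝ} {k : ℕ} (hk : 1 ≤ k)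
    (hx : ∀ i ∈ Finset.Icc 1 (k + 1), |x i| ≤ C) :
    |cesaroSeq (shiftSeq x) k - shiftSeq (cesaroSeq x) k| ≤ 2 * C / (k + 1) := by
  have h_first : |x 1| ≤ C := hx 1 (by simp)
  have h_average : |cesaroSeq (shiftSeq x) k| ≤ C :=
    abs_cesaroSeq_le hk fun i hi => hx (i + 1) (by simp only [Finset.mem_Icc] at hi ⊢; omega)
  have h_pos : (0 : ℝ) < k + 1 := k.cast_add_one_pos
  rw [cesaroSeq_shiftSeq_sub_shiftSeq_cesaroSeq, abs_div, abs_of_pos h_pos]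
  gcongr
  calc |cesaroSeq (shiftSeq x) k - x 1| ≤ |cesaroSeq (shiftSeq x) k| + |x 1| := abs_sub _ _
    _ ≤ 2 * C := by linarith

/-- For every bounded real sequence `x` and every `k ≥ 1`,
`|(H(Tx))_k − (T(Hx))_k| ≤ 2‖x‖_∞/(k+1)` (stated for any uniform bound `C` of `x`);
consequently `H(Tx) − T(Hx) ∈ c₀`. -/
theorem cesaro_shift_commutator_bound (x : ℕ → ℝ) (C : ℝ)
    (hx : ∀ k : ℕ, 1 ≤ k → |x k| ≤ C) :
    (∀ k : ℕ, 1 ≤ k →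
      |cesaroSeq (shiftSeq x) k - shiftSeq (cesaroSeq x) k| ≤ 2 * C / ((k : ℝ) + 1)) ∧
    Tendsto (fun k : ℕ => cesaroSeq (shiftSeq x) k - shiftSeq (cesaroSeq x) k)
      atTop (nhds 0) := by
  have h_bound (k : ℕ) (hk : 1 ≤ k) :
      |cesaroSeq (shiftSeq x) k - shiftSeq (cesaroSeq x) k| ≤ 2 * C / ((k : ℝ) + 1) :=
    abs_cesaroSeq_shiftSeq_sub_shiftSeq_cesaroSeq_le hk fun i hi =>
      hx i (Finset.mem_Icc.mp hi).1
  have h_limit : Tendsto (fun k : ℕ => 2 * C / ((k : ℝ) + 1)) atTop (nhds 0) := by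
    exact_mod_cast (tendsto_const_div_atTop_nhds_zero_nat (2 * C)).comp (tendsto_add_atTop_nat 1)
  exact ⟨h_bound, squeeze_zero_norm' ((eventually_ge_atTop 1).mono h_bound) h_limit⟩
end

section
/- There exists a state ω̃ on ℓ∞ (that is, a linear functional with ω̃(x) ≥ 0 whenever x ≥ 0 coordinatewise, and ω̃(𝟏) = 1 where 𝟏 = (1,1,1,…)) such that ω̃ ∘ T = ω̃, ω̃ ∘ H = ω̃, and ω̃ ∘ D_n = ω̃ for every n ≥ 1. -/
open Filter

/-- The dilation operator on (1-indexed) sequences: `(D_n x)_k = x_{⌈k/n⌉}`. -/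
def dilSeq (n : ℕ) (x : ℕ → ℝ) : ℕ → ℝ := fun k => x ((k + n - 1) / n)

/-- A sequence is bounded (belongs to ℓ∞). -/
def BddSeq (x : ℕ → ℝ) : Prop := ∃ C : ℝ, ∀ k, |x k| ≤ C

/-!
If `φ` is a generalized limit, then `φ ∘ H` is a shift-invariant one, since `H (T x - x)` is a
null sequence. Evaluating `φ ∘ H` on the sequences `j ↦ φ (H ^ j x)` therefore gives a generalized
limit `ω` with `ω ∘ H = ω`, and any such `ω` has the other invariances automatically.

For the shift this is again `H (T x - x) → 0`. For the dilation `D = D_n`, let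
`L_k = ∑_{i < k} x_i / i`. Summation by parts gives `H x = L - H L + r` with `r_k = x_k / k → 0`.
Although `L` may be unbounded, `D L - L` is bounded, and `H D z - D H z → 0` as soon as `H z - z`
is bounded, which holds for `z = L` and for `z = x`. Hence `ω (D H x - H x)` equals
`ω ((D L - L) - H (D L - L)) = 0`, while `ω (D x) = ω (H D x) = ω (D H x)`.
-/

open scoped Topology

/-- A positive linear functional on `ℓ∞` extending the limit of convergent sequences. As in the
definition of the sequence operators, functionals are defined on all real sequences, and only their
values on bounded ones are constrained. -/
structure IsGeneralizedLimit (ω : (ℕ → ℝ) →ₗ[ℝ] ℝ) : Prop where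
  nonneg : ∀ x : ℕ → ℝ, BddSeq x → (∀ k, 0 ≤ x k) → 0 ≤ ω x
  eq_of_tendsto : ∀ (x : ℕ → ℝ) (a : ℝ), Tendsto x atTop (𝓝 a) → ω x = a

/-- The Cesàro operator as a linear endomorphism of the space of all sequences. -/
noncomputable def cesaroLinear : Module.End ℝ (ℕ → ℝ) where
  toFun := cesaroSeq
  map_add' x y := by
    ext k
    simp [cesaroSeq, Finset.sum_add_distrib, add_div]
  map_smul' c x := by
    ext k
    simp [cesaroSeq, ← Finset.mul_sum, mul_div_assoc]

theorem cesaroSeq_sub (x y : ℕ → ℝ) : cesaroSeq (x - y) = cesaroSeq x - cesaroSeq y :=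
  map_sub cesaroLinear x y

section BoundedSequences

variable {x y : ℕ → ℝ} {a : ℝ}

theorem BddSeq.add (hx : BddSeq x) (hy : BddSeq y) : BddSeq (x + y) := by
  obtain ⟨C, hC⟩ := hx
  obtain ⟨D, hD⟩ := hy
  exact ⟨C + D, fun k => (abs_add_le _ _).trans (add_le_add (hC k) (hD k))⟩

theorem BddSeq.const_smul (hx : BddSeq x) (c : ℝ) : BddSeq (c • x) := by
  obtain ⟨C, hC⟩ := hx
  refine ⟨|c| * C, fun k => ?_⟩
  rw [Pi.smul_apply, smul_eq_mul, abs_mul]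
  exact mul_le_mul_of_nonneg_left (hC k) (abs_nonneg c)

theorem bddSeq_const (a : ℝ) : BddSeq fun _ => a := ⟨|a|, fun _ => le_rfl⟩

/-- The space `ℓ∞`, as a subspace of the space of all real sequences. -/
def boundedSequences : Submodule ℝ (ℕ → ℝ) where
  carrier := {x | BddSeq x}
  add_mem' := BddSeq.add
  zero_mem' := bddSeq_const 0
  smul_mem' c _ hx := hx.const_smul c

theorem BddSeq.sub (hx : BddSeq x) (hy : BddSeq y) : BddSeq (x - y) :=
  boundedSequences.sub_mem hx hy

theorem BddSeq.of_tendsto (h : Tendsto x atTop (𝓝 a)) : BddSeq x := by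
  obtain ⟨C, hC⟩ := (Metric.isBounded_range_of_tendsto x h).exists_norm_le
  exact ⟨C, fun k => hC _ ⟨k, rfl⟩⟩

theorem BddSeq.shift (hx : BddSeq x) : BddSeq (shiftSeq x) :=
  hx.imp fun _ hC k => hC (k + 1)

theorem BddSeq.dil (hx : BddSeq x) (n : ℕ) : BddSeq (dilSeq n x) :=
  hx.imp fun _ hC _ => hC _

theorem BddSeq.cesaro (hx : BddSeq x) : BddSeq (cesaroSeq x) := by
  obtain ⟨C, hC⟩ := hx
  have hC₀ : 0 ≤ C := (abs_nonneg _).trans (hC 0)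
  refine ⟨C, fun k => ?_⟩
  rw [cesaroSeq, abs_div, Nat.abs_cast]
  refine div_le_of_le_mul₀ k.cast_nonneg hC₀ ?_
  calc |∑ i ∈ Finset.Icc 1 k, x i| ≤ ∑ i ∈ Finset.Icc 1 k, |x i| := Finset.abs_sum_le_sum_abs _ _
    _ ≤ ∑ _i ∈ Finset.Icc 1 k, C := Finset.sum_le_sum fun i _ => hC i
    _ = C * k := by simp [mul_comm]

end BoundedSequences

section NullSequences

variable {x : ℕ → ℝ} {a C : ℝ} {n : ℕ}

theorem tendsto_zero_of_abs_le_div (h : ∀ k : ℕ, 1 ≤ k → |x k| ≤ C / k) :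
    Tendsto x atTop (𝓝 0) := by
  refine squeeze_zero_norm' ?_ (tendsto_const_div_atTop_nhds_zero_nat C)
  filter_upwards [eventually_ge_atTop 1] with k hk using h k hk

theorem BddSeq.tendsto_div_nat (hx : BddSeq x) :
    Tendsto (fun k : ℕ => x k / k) atTop (𝓝 0) := by
  obtain ⟨C, hC⟩ := hx
  refine tendsto_zero_of_abs_le_div (C := C) fun k _ => ?_
  rw [abs_div, Nat.abs_cast]
  gcongr
  exact hC k

theorem cesaroSeq_eq_sum_range (x : ℕ → ℝ) (k : ℕ) :
    cesaroSeq x k = (∑ i ∈ Finset.range k, x (i + 1)) / k := by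
  rw [cesaroSeq, Finset.range_eq_Ico, Finset.sum_Ico_add', zero_add,
    Finset.Ico_add_one_right_eq_Icc]

theorem tendsto_cesaroSeq (h : Tendsto x atTop (𝓝 a)) : Tendsto (cesaroSeq x) atTop (𝓝 a) :=
  ((tendsto_add_atTop_iff_nat 1).2 h).cesaro.congr fun k => by
    rw [cesaroSeq_eq_sum_range, div_eq_inv_mul]

theorem tendsto_dilSeq (hn : 1 ≤ n) (h : Tendsto x atTop (𝓝 a)) :
    Tendsto (dilSeq n x) atTop (𝓝 a) :=
  h.comp <| tendsto_atTop_mono (fun _ => Nat.div_le_div_right (by omega))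
    (Nat.tendsto_div_const_atTop (by omega : n ≠ 0))

theorem tendsto_cesaroSeq_shiftSeq_sub (hx : BddSeq x) :
    Tendsto (cesaroSeq (shiftSeq x - x)) atTop (𝓝 0) := by
  obtain ⟨C, hC⟩ := hx
  refine tendsto_zero_of_abs_le_div (C := C + C) fun k _ => ?_
  have telescope : ∑ i ∈ Finset.range k, (shiftSeq x - x) (i + 1) = x (k + 1) - x 1 :=
    Finset.sum_range_sub (fun i => x (i + 1)) k
  rw [cesaroSeq_eq_sum_range, telescope, abs_div, Nat.abs_cast]
  gcongr
  exact (abs_sub _ _).trans (add_le_add (hC _) (hC _))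

end NullSequences

namespace IsGeneralizedLimit

variable {φ ω : (ℕ → ℝ) →ₗ[ℝ] ℝ} {x y : ℕ → ℝ} {C : ℝ}

theorem congr (hω : IsGeneralizedLimit ω) (h : Tendsto (x - y) atTop (𝓝 0)) : ω x = ω y := by
  rw [← sub_eq_zero, ← map_sub, hω.eq_of_tendsto _ _ h]

theorem abs_apply_le (hω : IsGeneralizedLimit ω) (hx : ∀ k, |x k| ≤ C) : |ω x| ≤ C := by
  have hconst : ω (fun _ => C) = C := hω.eq_of_tendsto _ _ tendsto_const_nhds
  have hupper := hω.nonneg ((fun _ => C) - x) ((bddSeq_const C).sub ⟨C, hx⟩)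
    fun k => sub_nonneg.2 (abs_le.1 (hx k)).2
  have hlower := hω.nonneg ((fun _ => C) + x) ((bddSeq_const C).add ⟨C, hx⟩)
    fun k => neg_le_iff_add_nonneg'.1 (abs_le.1 (hx k)).1
  rw [map_sub, hconst] at hupper
  rw [map_add, hconst] at hlower
  exact abs_le.2 ⟨by linarith, by linarith⟩

theorem bddSeq_apply {ψ : ℕ → (ℕ → ℝ) →ₗ[ℝ] ℝ} (hψ : ∀ j, IsGeneralizedLimit (ψ j))
    (hx : BddSeq x) : BddSeq fun j => ψ j x :=
  hx.imp fun _ hC j => (hψ j).abs_apply_le hC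

theorem comp_pi (hφ : IsGeneralizedLimit φ) {ψ : ℕ → (ℕ → ℝ) →ₗ[ℝ] ℝ}
    (hψ : ∀ j, IsGeneralizedLimit (ψ j)) : IsGeneralizedLimit (φ ∘ₗ LinearMap.pi ψ) where
  nonneg x hx hx₀ := hφ.nonneg _ (bddSeq_apply hψ hx) fun j => (hψ j).nonneg x hx hx₀
  eq_of_tendsto x a h := hφ.eq_of_tendsto _ _ <|
    tendsto_const_nhds.congr fun j => ((hψ j).eq_of_tendsto x a h).symm

theorem comp_cesaroLinear (hω : IsGeneralizedLimit ω) :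
    IsGeneralizedLimit (ω ∘ₗ cesaroLinear) where
  nonneg _ hx hx₀ := hω.nonneg _ hx.cesaro fun k =>
    div_nonneg (Finset.sum_nonneg fun i _ => hx₀ i) k.cast_nonneg
  eq_of_tendsto _ a h := hω.eq_of_tendsto _ a (tendsto_cesaroSeq h)

theorem apply_cesaroSeq_shiftSeq (hω : IsGeneralizedLimit ω) (hx : BddSeq x) :
    ω (cesaroSeq (shiftSeq x)) = ω (cesaroSeq x) :=
  hω.congr <| by simpa only [cesaroSeq_sub] using tendsto_cesaroSeq_shiftSeq_sub hx

end IsGeneralizedLimit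

section Existence

theorem BddSeq.tendsto_limUnder {x : ℕ → ℝ} (hx : BddSeq x) (U : Ultrafilter ℕ) :
    Tendsto x U (𝓝 (limUnder (U : Filter ℕ) x)) := by
  obtain ⟨C, hC⟩ := hx
  obtain ⟨a, -, ha⟩ := (isCompact_Icc (a := -C) (b := C)).ultrafilter_le_nhds (U.map x) <|
    le_principal_iff.2 <| mem_map.2 <| univ_mem' fun k => abs_le.1 (hC k)
  exact tendsto_nhds_limUnder ⟨a, ha⟩

/-- The limit along an ultrafilter, as a linear functional on `ℓ∞`. -/
noncomputable def ultrafilterLimit (U : Ultrafilter ℕ) : boundedSequences →ₗ[ℝ] ℝ where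
  toFun x := limUnder (U : Filter ℕ) (x : ℕ → ℝ)
  map_add' x y := ((x.2.tendsto_limUnder U).add (y.2.tendsto_limUnder U)).limUnder_eq
  map_smul' c x := ((x.2.tendsto_limUnder U).const_smul c).limUnder_eq

theorem exists_isGeneralizedLimit : ∃ φ, IsGeneralizedLimit φ := by
  obtain ⟨φ, hφ⟩ := (ultrafilterLimit (hyperfilter ℕ)).exists_extend
  have hlim (x : ℕ → ℝ) (hx : BddSeq x) : Tendsto x (hyperfilter ℕ : Filter ℕ) (𝓝 (φ x)) := by
    have hφx : φ x = limUnder (hyperfilter ℕ : Filter ℕ) x := LinearMap.congr_fun hφ ⟨x, hx⟩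
    exact hφx ▸ hx.tendsto_limUnder _
  exact ⟨φ, fun x hx hx₀ => ge_of_tendsto' (hlim x hx) hx₀, fun x a h =>
    tendsto_nhds_unique (hlim x (.of_tendsto h)) (h.mono_left Nat.hyperfilter_le_atTop)⟩

theorem exists_isGeneralizedLimit_invariant {S : Module.End ℝ (ℕ → ℝ)}
    (hS : ∀ ω, IsGeneralizedLimit ω → IsGeneralizedLimit (ω ∘ₗ S)) :
    ∃ ω, IsGeneralizedLimit ω ∧ ∀ x, BddSeq x → ω (S x) = ω x := by
  obtain ⟨φ, hφ⟩ := exists_isGeneralizedLimit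
  have hiter (j : ℕ) : IsGeneralizedLimit (φ ∘ₗ (S ^ j)) := by
    induction j with
    | zero => exact hφ
    | succ j ih => exact hS _ ih
  refine ⟨(φ ∘ₗ cesaroLinear) ∘ₗ LinearMap.pi fun j => φ ∘ₗ (S ^ j),
    hφ.comp_cesaroLinear.comp_pi hiter, fun x hx => ?_⟩
  -- Replacing `x` by `S x` shifts the sequence `j ↦ φ (S ^ j x)`, and `φ ∘ H` is shift invariant.
  exact hφ.apply_cesaroSeq_shiftSeq (IsGeneralizedLimit.bddSeq_apply hiter hx)

end Existence

section Dilation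

variable {x : ℕ → ℝ} {n k q : ℕ}

theorem exists_mem_Ioc_mul (hn : 1 ≤ n) (hk : 1 ≤ k) :
    ∃ q, k ∈ Finset.Ioc (n * q) (n * (q + 1)) := by
  refine ⟨(k - 1) / n, Finset.mem_Ioc.2 ?_⟩
  have hdiv := Nat.div_add_mod (k - 1) n
  have hmod := Nat.mod_lt (k - 1) hn
  rw [mul_add_one]
  omega

theorem dilSeq_of_mem_Ioc (x : ℕ → ℝ) (hk : k ∈ Finset.Ioc (n * q) (n * (q + 1))) :
    dilSeq n x k = x (q + 1) := by
  rw [Finset.mem_Ioc] at hk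
  have hceil : (k + n - 1) / n = q + 1 := by
    refine Nat.div_eq_of_lt_le ?_ ?_ <;> grind
  rw [dilSeq, hceil]

theorem sum_Ioc_dilSeq (x : ℕ → ℝ) (hqk : n * q ≤ k) (hk : k ≤ n * (q + 1)) :
    ∑ i ∈ Finset.Ioc (n * q) k, dilSeq n x i = ((k : ℝ) - n * q) * x (q + 1) := by
  have hblock (i : ℕ) (hi : i ∈ Finset.Ioc (n * q) k) : dilSeq n x i = x (q + 1) :=
    dilSeq_of_mem_Ioc x (Finset.Ioc_subset_Ioc_right hk hi)
  rw [Finset.sum_congr rfl hblock, Finset.sum_const, Nat.card_Ioc, nsmul_eq_mul,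
    Nat.cast_sub hqk, Nat.cast_mul]

theorem sum_Icc_one_add_sum_Ioc {M : Type*} [AddCommMonoid M] (f : ℕ → M) {m k : ℕ}
    (hmk : m ≤ k) :
    ∑ i ∈ Finset.Icc 1 m, f i + ∑ i ∈ Finset.Ioc m k, f i = ∑ i ∈ Finset.Icc 1 k, f i :=
  Finset.sum_Ioc_consecutive f (Nat.zero_le m) hmk

theorem sum_Icc_dilSeq_mul (n : ℕ) (x : ℕ → ℝ) (q : ℕ) :
    ∑ i ∈ Finset.Icc 1 (n * q), dilSeq n x i = n * ∑ j ∈ Finset.Icc 1 q, x j := by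
  induction q with
  | zero => simp
  | succ q ih =>
    have hle : n * q ≤ n * (q + 1) := Nat.mul_le_mul_left n q.le_succ
    rw [← sum_Icc_one_add_sum_Ioc _ hle, ih, sum_Ioc_dilSeq x hle le_rfl,
      Finset.sum_Icc_succ_top (Nat.le_add_left 1 q)]
    push_cast
    ring

theorem sum_Icc_dilSeq (x : ℕ → ℝ) (hk : k ∈ Finset.Ioc (n * q) (n * (q + 1))) :
    ∑ i ∈ Finset.Icc 1 k, dilSeq n x i =
      n * ∑ j ∈ Finset.Icc 1 (q + 1), x j - (n * (q + 1) - k : ℝ) * x (q + 1) := by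
  obtain ⟨hqk, hkq⟩ := Finset.mem_Ioc.1 hk
  rw [← sum_Icc_one_add_sum_Ioc _ hqk.le, sum_Icc_dilSeq_mul, sum_Ioc_dilSeq x hqk.le hkq,
    Finset.sum_Icc_succ_top (Nat.le_add_left 1 q)]
  ring

theorem cesaroSeq_dilSeq_sub_apply (x : ℕ → ℝ) (hk : k ∈ Finset.Ioc (n * q) (n * (q + 1))) :
    (cesaroSeq (dilSeq n x) - dilSeq n (cesaroSeq x)) k =
      (n * (q + 1) - k : ℝ) * (cesaroSeq x - x) (q + 1) / k := by
  have hk₀ : (k : ℝ) ≠ 0 := by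
    exact_mod_cast (Nat.zero_le _).trans_lt (Finset.mem_Ioc.1 hk).1 |>.ne'
  rw [Pi.sub_apply, Pi.sub_apply, dilSeq_of_mem_Ioc _ hk, cesaroSeq, cesaroSeq,
    sum_Icc_dilSeq x hk]
  push_cast
  field_simp
  ring

theorem tendsto_cesaroSeq_dilSeq_sub (hn : 1 ≤ n) (hx : BddSeq (cesaroSeq x - x)) :
    Tendsto (cesaroSeq (dilSeq n x) - dilSeq n (cesaroSeq x)) atTop (𝓝 0) := by
  obtain ⟨C, hC⟩ := hx
  refine tendsto_zero_of_abs_le_div (C := n * C) fun k hk₁ => ?_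
  obtain ⟨q, hk⟩ := exists_mem_Ioc_mul hn hk₁
  obtain ⟨hqk, hkq⟩ := Finset.mem_Ioc.1 hk
  have hqk' : (n * q : ℝ) < k := by exact_mod_cast hqk
  have hkq' : (k : ℝ) ≤ n * (q + 1) := by exact_mod_cast hkq
  rw [cesaroSeq_dilSeq_sub_apply x hk, abs_div, Nat.abs_cast, abs_mul,
    abs_of_nonneg (sub_nonneg.2 hkq')]
  gcongr
  · linarith
  · exact hC (q + 1)

end Dilation

section LogSum

variable {x : ℕ → ℝ} {C : ℝ} {n m k : ℕ}

/-- The logarithmic partial sums `∑_{1 ≤ i < k} x_i / i`; the term `i = 0` vanishes because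
division by zero gives zero. -/
noncomputable def logSum (x : ℕ → ℝ) : ℕ → ℝ := fun k => ∑ i ∈ Finset.range k, x i / i

theorem logSum_succ (x : ℕ → ℝ) (k : ℕ) : logSum x (k + 1) = logSum x k + x k / k :=
  Finset.sum_range_succ _ k

theorem sum_Icc_logSum_add (x : ℕ → ℝ) (k : ℕ) :
    ∑ j ∈ Finset.Icc 1 k, logSum x j + ∑ j ∈ Finset.Icc 1 k, x j = k * logSum x (k + 1) := by
  induction k with
  | zero => simp
  | succ k ih =>
    rw [Finset.sum_Icc_succ_top (Nat.le_add_left 1 k), Finset.sum_Icc_succ_top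
      (Nat.le_add_left 1 k), logSum_succ x (k + 1)]
    have hk : ((k + 1 : ℕ) : ℝ) * (x (k + 1) / (k + 1 : ℕ)) = x (k + 1) :=
      mul_div_cancel₀ _ (Nat.cast_ne_zero.2 k.succ_ne_zero)
    push_cast at hk ⊢
    linear_combination ih - hk

theorem cesaroSeq_eq_logSum_sub (x : ℕ → ℝ) :
    cesaroSeq x = logSum x - cesaroSeq (logSum x) + fun k : ℕ => x k / k := by
  ext k
  rcases k.eq_zero_or_pos with rfl | hk
  · simp [cesaroSeq, logSum]
  · have hk₀ : (k : ℝ) ≠ 0 := Nat.cast_ne_zero.2 hk.ne'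
    have hsum := sum_Icc_logSum_add x k
    rw [logSum_succ] at hsum
    simp only [Pi.add_apply, Pi.sub_apply, cesaroSeq]
    field_simp at hsum ⊢
    linear_combination hsum

theorem bddSeq_cesaroSeq_logSum_sub (hx : BddSeq x) :
    BddSeq (cesaroSeq (logSum x) - logSum x) := by
  have heq : cesaroSeq (logSum x) - logSum x = (fun k : ℕ => x k / k) - cesaroSeq x := by
    rw [cesaroSeq_eq_logSum_sub x]
    abel
  exact heq ▸ (BddSeq.of_tendsto hx.tendsto_div_nat).sub hx.cesaro

theorem abs_logSum_sub_le (hx : ∀ k, |x k| ≤ C) (hm : 1 ≤ m) (hmk : m ≤ k) :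
    |logSum x k - logSum x m| ≤ (k - m) * (C / m) := by
  have hC₀ : 0 ≤ C := (abs_nonneg _).trans (hx 0)
  have hterm (i : ℕ) (hi : i ∈ Finset.Ico m k) : |x i / i| ≤ C / m := by
    rw [abs_div, Nat.abs_cast]
    have hmi : m ≤ i := (Finset.mem_Ico.1 hi).1
    gcongr
    exact hx i
  calc |logSum x k - logSum x m| = |∑ i ∈ Finset.Ico m k, x i / i| := by
        rw [Finset.sum_Ico_eq_sub _ hmk, logSum, logSum]
    _ ≤ ∑ i ∈ Finset.Ico m k, |x i / i| := Finset.abs_sum_le_sum_abs _ _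
    _ ≤ (Finset.Ico m k).card • (C / m) := Finset.sum_le_card_nsmul _ _ _ hterm
    _ = (k - m) * (C / m) := by rw [Nat.card_Ico, nsmul_eq_mul, Nat.cast_sub hmk]

theorem bddSeq_dilSeq_logSum_sub (hn : 1 ≤ n) (hx : BddSeq x) :
    BddSeq (dilSeq n (logSum x) - logSum x) := by
  obtain ⟨C, hC⟩ := hx
  have hC₀ : 0 ≤ C := (abs_nonneg _).trans (hC 0)
  refine ⟨n * C, fun k => ?_⟩
  rcases k.eq_zero_or_pos with rfl | hk₁
  · have hceil : (0 + n - 1) / n = 0 := Nat.div_eq_of_lt (by omega)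
    rw [Pi.sub_apply, dilSeq, hceil, sub_self, abs_zero]
    positivity
  · obtain ⟨q, hk⟩ := exists_mem_Ioc_mul hn hk₁
    obtain ⟨hqk, hkq⟩ := Finset.mem_Ioc.1 hk
    have hqk' : q + 1 ≤ k := (Nat.le_mul_of_pos_left q hn).trans_lt hqk
    have hkq' : (k : ℝ) ≤ n * (q + 1 : ℕ) := by exact_mod_cast hkq
    rw [Pi.sub_apply, dilSeq_of_mem_Ioc _ hk, abs_sub_comm]
    calc |logSum x k - logSum x (q + 1)| ≤ (k - (q + 1 : ℕ)) * (C / (q + 1 : ℕ)) :=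
          abs_logSum_sub_le hC (Nat.le_add_left 1 q) hqk'
      _ ≤ (n * (q + 1 : ℕ)) * (C / (q + 1 : ℕ)) := by
          gcongr
          exact (sub_le_self _ (Nat.cast_nonneg _)).trans hkq'
      _ = n * C := by field_simp

end LogSum

namespace IsGeneralizedLimit

variable {ω : (ℕ → ℝ) →ₗ[ℝ] ℝ} {x : ℕ → ℝ} {n : ℕ}

theorem apply_shiftSeq (hω : IsGeneralizedLimit ω)
    (hH : ∀ x, BddSeq x → ω (cesaroSeq x) = ω x) (hx : BddSeq x) : ω (shiftSeq x) = ω x := by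
  rw [← hH _ hx.shift, hω.apply_cesaroSeq_shiftSeq hx, hH x hx]

theorem apply_dilSeq_cesaroSeq (hω : IsGeneralizedLimit ω)
    (hH : ∀ x, BddSeq x → ω (cesaroSeq x) = ω x) (hn : 1 ≤ n) (hx : BddSeq x) :
    ω (dilSeq n (cesaroSeq x)) = ω (cesaroSeq x) := by
  set L := logSum x
  set r : ℕ → ℝ := fun k => x k / k
  have hfix : ω (cesaroSeq (dilSeq n L) - cesaroSeq L) = ω (dilSeq n L - L) := by
    rw [← cesaroSeq_sub, hH _ (bddSeq_dilSeq_logSum_sub hn hx)]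
  have hcomm : ω (cesaroSeq (dilSeq n L)) = ω (dilSeq n (cesaroSeq L)) :=
    hω.congr (tendsto_cesaroSeq_dilSeq_sub hn (bddSeq_cesaroSeq_logSum_sub hx))
  have hr : ω (dilSeq n r) = ω r :=
    (hω.eq_of_tendsto _ 0 (tendsto_dilSeq hn hx.tendsto_div_nat)).trans
      (hω.eq_of_tendsto _ 0 hx.tendsto_div_nat).symm
  have hdil : dilSeq n (L - cesaroSeq L + r) = dilSeq n L - dilSeq n (cesaroSeq L) + dilSeq n r :=
    rfl
  rw [cesaroSeq_eq_logSum_sub x, hdil]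
  simp only [map_sub, map_add] at hfix ⊢
  linarith

theorem apply_dilSeq (hω : IsGeneralizedLimit ω)
    (hH : ∀ x, BddSeq x → ω (cesaroSeq x) = ω x) (hn : 1 ≤ n) (hx : BddSeq x) :
    ω (dilSeq n x) = ω x :=
  calc ω (dilSeq n x) = ω (cesaroSeq (dilSeq n x)) := (hH _ (hx.dil n)).symm
    _ = ω (dilSeq n (cesaroSeq x)) := hω.congr (tendsto_cesaroSeq_dilSeq_sub hn (hx.cesaro.sub hx))
    _ = ω (cesaroSeq x) := hω.apply_dilSeq_cesaroSeq hH hn hx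
    _ = ω x := hH x hx

end IsGeneralizedLimit

/-- There exists a state `ω̃` on `ℓ∞` (a positive linear functional with `ω̃(𝟏) = 1`)
which is invariant under the shift operator `T`, the Cesàro operator `H`,
and all the dilation operators `D_n`, `n ≥ 1`. -/
theorem exists_shift_cesaro_dilation_invariant_state :
    ∃ ω : (ℕ → ℝ) →ₗ[ℝ] ℝ,
      (∀ x : ℕ → ℝ, BddSeq x → (∀ k, 0 ≤ x k) → 0 ≤ ω x) ∧
      ω (fun _ => 1) = 1 ∧
      (∀ x : ℕ → ℝ, BddSeq x → ω (shiftSeq x) = ω x) ∧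
      (∀ x : ℕ → ℝ, BddSeq x → ω (cesaroSeq x) = ω x) ∧
      (∀ n : ℕ, 1 ≤ n → ∀ x : ℕ → ℝ, BddSeq x → ω (dilSeq n x) = ω x) := by
  obtain ⟨ω, hω, hH⟩ :=
    exists_isGeneralizedLimit_invariant (S := cesaroLinear) fun _ h => h.comp_cesaroLinear
  exact ⟨ω, hω.nonneg, hω.eq_of_tendsto _ 1 tendsto_const_nhds,
    fun _ => hω.apply_shiftSeq hH, hH, fun _ hn _ => hω.apply_dilSeq hH hn⟩
end

section
/- Let φ be a state on ℓ∞ (a linear functional with φ(x) ≥ 0 whenever x ≥ 0 coordinatewise and φ(𝟏) = 1) such that φ(z) = 0 for every z ∈ c₀ and φ(Hx) = φ(x) for every x ∈ ℓ∞. Then φ(Tx) = φ(x) for every x ∈ ℓ∞, i.e. every Cesàro-invariant state on ℓ∞ vanishing on c₀ is a Banach limit (translation invariant). -/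
open Filter

theorem BddSeq.shiftSeq {x : ℕ → ℝ} (hx : BddSeq x) : BddSeq (shiftSeq x) :=
  hx.imp fun _ hC k => hC (k + 1)

theorem cesaroSeq_shiftSeq_sub_cesaroSeq (x : ℕ → ℝ) :
    cesaroSeq (shiftSeq x) - cesaroSeq x = fun k => (x (k + 1) - x 1) / k := by
  funext k
  have telescope : ∑ i ∈ Finset.Icc 1 k, (x (i + 1) - x i) = x (k + 1) - x 1 := by
    -- `Finset.sum_Icc_sub` would require `1 ≤ k`; the half-open interval also covers `k = 0`.
    rw [← Finset.Ico_add_one_right_eq_Icc, Finset.sum_Ico_sub x (Nat.le_add_left 1 k)]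
  simp only [Pi.sub_apply, cesaroSeq, shiftSeq, ← sub_div, ← Finset.sum_sub_distrib, telescope]

theorem tendsto_cesaroSeq_shiftSeq_sub_cesaroSeq {x : ℕ → ℝ} (hx : BddSeq x) :
    Tendsto (cesaroSeq (shiftSeq x) - cesaroSeq x) atTop (nhds 0) := by
  obtain ⟨C, hC⟩ := hx
  rw [cesaroSeq_shiftSeq_sub_cesaroSeq]
  refine tendsto_bdd_div_atTop_nhds_zero (b := -C - x 1) (B := C - x 1)
    (.of_forall fun k => ?_) (.of_forall fun k => ?_) tendsto_natCast_atTop_atTop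
  · exact sub_le_sub_right (neg_le_of_abs_le (hC (k + 1))) (x 1)
  · exact sub_le_sub_right (le_of_abs_le (hC (k + 1))) (x 1)

theorem cesaro_invariant_state_is_banach_limit_general {G : Type*} [AddGroup G]
    (φ : (ℕ → ℝ) →+ G)
    (hc0 : ∀ z : ℕ → ℝ, Tendsto z atTop (nhds 0) → φ z = 0)
    (hH : ∀ x : ℕ → ℝ, BddSeq x → φ (cesaroSeq x) = φ x) :
    ∀ x : ℕ → ℝ, BddSeq x → φ (shiftSeq x) = φ x := by
  intro x hx
  have cesaro_eq : φ (cesaroSeq (shiftSeq x)) = φ (cesaroSeq x) := by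
    rw [← sub_eq_zero, ← map_sub]
    exact hc0 _ (tendsto_cesaroSeq_shiftSeq_sub_cesaroSeq hx)
  calc
    φ (shiftSeq x) = φ (cesaroSeq (shiftSeq x)) := (hH _ hx.shiftSeq).symm
    _ = φ (cesaroSeq x) := cesaro_eq
    _ = φ x := hH x hx

/-- Every Cesàro-invariant state on `ℓ∞` vanishing on `c₀` is a Banach limit:
if `φ` is a positive linear functional with `φ(𝟏) = 1`, `φ(z) = 0` for every sequence
`z` converging to `0`, and `φ(Hx) = φ(x)` for all bounded `x`, then `φ(Tx) = φ(x)`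
for all bounded `x`. -/
theorem cesaro_invariant_state_is_banach_limit (φ : (ℕ → ℝ) →ₗ[ℝ] ℝ)
    (hpos : ∀ x : ℕ → ℝ, BddSeq x → (∀ k, 0 ≤ x k) → 0 ≤ φ x)
    (hone : φ (fun _ => 1) = 1)
    (hc0 : ∀ z : ℕ → ℝ, Tendsto z atTop (nhds 0) → φ z = 0)
    (hH : ∀ x : ℕ → ℝ, BddSeq x → φ (cesaroSeq x) = φ x) :
    ∀ x : ℕ → ℝ, BddSeq x → φ (shiftSeq x) = φ x :=
  cesaro_invariant_state_is_banach_limit_general φ.toAddMonoidHom hc0 hH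
end

section
/- There exists a state ω̃ on L∞(ℝ) (a linear functional with ω̃(f) ≥ 0 whenever f ≥ 0 a.e. and ω̃(1) = 1) satisfying: (1) ω̃(f) = 0 for every continuous f : ℝ → ℝ vanishing at infinity; (2) ess liminf_{t → +∞} f(t) ≤ ω̃(f) ≤ ess limsup_{t → +∞} f(t) for every real-valued f ∈ L∞(ℝ); (3) ω̃(f) = 0 whenever the essential support of f is compact; (4) ω̃ ∘ T_c = ω̃, ω̃ ∘ D_a = ω̃ and ω̃ ∘ H = ω̃ for all c ∈ ℝ and a > 0. -/
open Filter MeasureTheory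

/-- A function is (everywhere) bounded. -/
def BddFun (f : ℝ → ℝ) : Prop := ∃ C : ℝ, ∀ x, |f x| ≤ C

/-!
Compose the Cesàro means with the exponential: `ω f` is the limit, along an ultrafilter finer than
`atTop`, of `t ↦ t⁻¹ ∫₀ᵗ f (exp s) ds`. Such a limit does not see functions with bounded primitive.

* A translate `g (· + c) - g` of a bounded function has bounded primitive. Under `exp` dilations
  become translations, so `ω` is dilation invariant.
* If `G s = (Hf) (exp s)` then `G' s = f (exp s) - G s` almost everywhere, and `G` is bounded. So
  `(Hf) ∘ exp - f ∘ exp` has bounded primitive, and `ω (Hf) = ω f`.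
* Finally `ω (f (· + c) - f) = ω (H (f (· + c) - f))`, and the Cesàro means on the right tend to
  `0` at infinity, again because `f (· + c) - f` has bounded primitive.
-/

open Set Topology

theorem exists_linearMap_tendsto_ultrafilter {ι R E F : Type*} [Semiring R] [AddCommMonoid E]
    [Module R E] [NormedAddCommGroup F] [ProperSpace F] [Module R F] [ContinuousConstSMul R F]
    (U : Ultrafilter ι) (T : ι → E →ₗ[R] F) (hT : ∀ x, ∃ C, ∀ i, ‖T i x‖ ≤ C) :
    ∃ L : E →ₗ[R] F, ∀ x, Tendsto (fun i => T i x) U (𝓝 (L x)) := by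
  have exists_lim (x : E) : ∃ y, Tendsto (fun i => T i x) U (𝓝 y) := by
    obtain ⟨C, hC⟩ := hT x
    have hmem : ∀ᶠ i in (U : Filter ι), T i x ∈ Metric.closedBall 0 C :=
      Eventually.of_forall fun i => mem_closedBall_zero_iff.2 (hC i)
    obtain ⟨y, -, hy⟩ := (isCompact_closedBall (0 : F) C).ultrafilter_le_nhds
      (U.map fun i => T i x) (le_principal_iff.2 hmem)
    exact ⟨y, hy⟩
  choose L hL using exists_lim
  exact ⟨linearMapOfTendsto L T (tendsto_pi_nhds.2 hL), hL⟩

theorem quasiMeasurePreserving_of_leftInverse_of_differentiableOn {E : Type*}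
    [NormedAddCommGroup E] [NormedSpace ℝ E] [FiniteDimensional ℝ E] [MeasurableSpace E]
    [BorelSpace E] (μ : Measure E) [μ.IsAddHaarMeasure] {f g : E → E} (hf : Measurable f)
    (hgf : Function.LeftInverse g f) (hg : DifferentiableOn ℝ g (range f)) :
    Measure.QuasiMeasurePreserving f μ μ := by
  refine ⟨hf, Measure.AbsolutelyContinuous.mk fun s hs hμs => ?_⟩
  have hpre : f ⁻¹' s = g '' (s ∩ range f) := by
    rw [← image_preimage_eq_inter_range, hgf.image_image]
  rw [Measure.map_apply hf hs, hpre]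
  exact addHaar_image_eq_zero_of_differentiableOn_of_addHaar_eq_zero μ
    (hg.mono inter_subset_right) (measure_inter_null_of_null_left _ hμs)

theorem quasiMeasurePreserving_exp : Measure.QuasiMeasurePreserving Real.exp := by
  refine quasiMeasurePreserving_of_leftInverse_of_differentiableOn volume
    Real.measurable_exp Real.log_exp fun x hx => ?_
  rw [Real.range_exp] at hx
  exact (Real.differentiableAt_log (ne_of_gt hx)).differentiableWithinAt

theorem intervalIntegrable_of_locallyIntegrable {E : Type*} [NormedAddCommGroup E]
    {μ : Measure ℝ} {f : ℝ → E} (hf : LocallyIntegrable f μ) (a b : ℝ) :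
    IntervalIntegrable f μ a b :=
  (hf.integrableOn_isCompact isCompact_uIcc).intervalIntegrable

theorem exists_eventually_integral_le {f : ℝ → ℝ} (hf : LocallyIntegrable f) (a : ℝ) {b : ℝ}
    (hfb : ∀ᶠ x in atTop ⊓ ae volume, f x ≤ b) :
    ∃ K, ∀ᶠ u in atTop, ∫ v in a..u, f v ≤ K + b * u := by
  have hint := intervalIntegrable_of_locallyIntegrable hf
  obtain ⟨N, hN⟩ : ∃ N, ∀ᵐ x, N ≤ x → f x ≤ b := by
    obtain ⟨s, hs, t, ht, hst⟩ := eventually_inf.1 hfb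
    obtain ⟨N, hN⟩ := mem_atTop_sets.1 hs
    exact ⟨N, mem_of_superset ht fun x hxt hNx => hst x ⟨hN x hNx, hxt⟩⟩
  refine ⟨(∫ v in a..N, f v) - b * N, (eventually_ge_atTop N).mono fun u hu => ?_⟩
  have htail : ∫ v in N..u, f v ≤ ∫ _ in N..u, b := by
    refine intervalIntegral.integral_mono_ae_restrict hu (hint N u) intervalIntegrable_const
      ((ae_restrict_iff' measurableSet_Icc).2 ?_)
    filter_upwards [hN] with x hx hxI using hx hxI.1
  calc ∫ v in a..u, f v = (∫ v in a..N, f v) + ∫ v in N..u, f v :=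
        (intervalIntegral.integral_add_adjacent_intervals (hint a N) (hint N u)).symm
    _ ≤ (∫ v in a..N, f v) + ∫ _ in N..u, b := by gcongr
    _ = (∫ v in a..N, f v) - b * N + b * u := by
        rw [intervalIntegral.integral_const, smul_eq_mul]; ring

theorem abs_integral_le_of_abs_le {f : ℝ → ℝ} {C : ℝ} (hC : ∀ x, |f x| ≤ C) (a b : ℝ) :
    |∫ v in a..b, f v| ≤ C * |b - a| := by
  rw [← Real.norm_eq_abs]
  exact intervalIntegral.norm_integral_le_of_norm_le_const fun v _ => hC v

theorem BddFun.sub {f g : ℝ → ℝ} (hf : BddFun f) (hg : BddFun g) :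
    BddFun fun x => f x - g x := by
  obtain ⟨C, hC⟩ := hf
  obtain ⟨D, hD⟩ := hg
  exact ⟨C + D, fun x => (abs_sub _ _).trans (add_le_add (hC x) (hD x))⟩

theorem BddFun.comp {f : ℝ → ℝ} (hf : BddFun f) (φ : ℝ → ℝ) : BddFun fun x => f (φ x) := by
  obtain ⟨C, hC⟩ := hf
  exact ⟨C, fun x => hC (φ x)⟩

theorem bddFun_const (c : ℝ) : BddFun fun _ => c :=
  ⟨|c|, fun _ => le_rfl⟩

theorem bddFun_of_tendsto_cocompact {f : ℝ → ℝ} (hf : Continuous f)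
    (h0 : Tendsto f (cocompact ℝ) (𝓝 0)) : BddFun f := by
  obtain ⟨C, hC⟩ := (ZeroAtInftyContinuousMap.isBounded_range
    (⟨⟨f, hf⟩, h0⟩ : ZeroAtInftyContinuousMap ℝ ℝ)).exists_norm_le
  exact ⟨C, fun x => hC _ (mem_range_self x)⟩

/-- The bounded measurable functions: representatives of the elements of `L∞(ℝ)`. -/
def boundedMeasurable : Submodule ℝ (ℝ → ℝ) where
  carrier := {f | Measurable f ∧ BddFun f}
  zero_mem' := ⟨measurable_const, bddFun_const 0⟩
  add_mem' := by
    rintro f g ⟨hf, C, hC⟩ ⟨hg, D, hD⟩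
    exact ⟨hf.add hg, C + D, fun x => (abs_add_le _ _).trans (add_le_add (hC x) (hD x))⟩
  smul_mem' := by
    rintro c f ⟨hf, C, hC⟩
    refine ⟨hf.const_smul c, |c| * C, fun x => ?_⟩
    rw [Pi.smul_apply, smul_eq_mul, abs_mul]
    exact mul_le_mul_of_nonneg_left (hC x) (abs_nonneg c)

theorem comp_mem_boundedMeasurable {f φ : ℝ → ℝ} (hf : f ∈ boundedMeasurable)
    (hφ : Measurable φ) : (fun x => f (φ x)) ∈ boundedMeasurable :=
  ⟨hf.1.comp hφ, hf.2.comp φ⟩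

theorem locallyIntegrable_of_mem_boundedMeasurable {f : ℝ → ℝ} (hf : f ∈ boundedMeasurable) :
    LocallyIntegrable f := by
  obtain ⟨hfm, C, hC⟩ := hf
  exact (memLp_top_of_bound hfm.aestronglyMeasurable C (Eventually.of_forall hC)).locallyIntegrable
    le_top

theorem intervalIntegrable_of_mem_boundedMeasurable {f : ℝ → ℝ} (hf : f ∈ boundedMeasurable)
    (a b : ℝ) : IntervalIntegrable f volume a b :=
  intervalIntegrable_of_locallyIntegrable (locallyIntegrable_of_mem_boundedMeasurable hf) a b

theorem exists_lipschitzWith_integral {f : ℝ → ℝ} (hf : f ∈ boundedMeasurable) (a : ℝ) :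
    ∃ K, LipschitzWith K fun u => ∫ v in a..u, f v := by
  have hint := intervalIntegrable_of_mem_boundedMeasurable hf
  obtain ⟨C, hC⟩ := hf.2
  refine ⟨C.toNNReal, LipschitzWith.of_dist_le' fun x y => ?_⟩
  rw [Real.dist_eq, Real.dist_eq,
    intervalIntegral.integral_interval_sub_left (hint a x) (hint a y)]
  exact abs_integral_le_of_abs_le hC y x

theorem bddFun_integral_comp_add_right_sub {f : ℝ → ℝ} (hf : f ∈ boundedMeasurable) (c : ℝ) :
    BddFun fun u => ∫ v in (0 : ℝ)..u, (f (v + c) - f v) := by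
  have hint := intervalIntegrable_of_mem_boundedMeasurable hf
  have hint_add := intervalIntegrable_of_mem_boundedMeasurable
    (comp_mem_boundedMeasurable hf (measurable_add_const c))
  obtain ⟨C, hC⟩ := hf.2
  have hshift (x : ℝ) : |∫ v in x..x + c, f v| ≤ C * |c| := by
    simpa using abs_integral_le_of_abs_le hC x (x + c)
  refine ⟨C * |c| + C * |c|, fun u => ?_⟩
  have hsplit : ∫ v in (0 : ℝ)..u, (f (v + c) - f v) =
      (∫ v in u..u + c, f v) - ∫ v in (0 : ℝ)..0 + c, f v := by
    rw [intervalIntegral.integral_sub (hint_add 0 u) (hint 0 u),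
      intervalIntegral.integral_comp_add_right,
      intervalIntegral.integral_interval_sub_interval_comm' (hint _ _) (hint _ _) (hint _ _)]
  simp only [hsplit]
  exact (abs_sub _ _).trans (add_le_add (hshift u) (hshift 0))

/-- The Cesàro operator `H`, with the value `0` at `u = 0`. -/
noncomputable def cesaroMean (f : ℝ → ℝ) (u : ℝ) : ℝ := (∫ v in (0 : ℝ)..u, f v) / u

theorem abs_cesaroMean_le {f : ℝ → ℝ} {C : ℝ} (hC : ∀ x, |f x| ≤ C) (u : ℝ) :
    |cesaroMean f u| ≤ C := by
  rw [cesaroMean, abs_div]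
  refine div_le_of_le_mul₀ (abs_nonneg u) ((abs_nonneg _).trans (hC 0)) ?_
  simpa using abs_integral_le_of_abs_le hC 0 u

theorem cesaroMean_mem_boundedMeasurable {f : ℝ → ℝ} (hf : f ∈ boundedMeasurable) :
    cesaroMean f ∈ boundedMeasurable := by
  have hprim := intervalIntegral.continuous_primitive
    (intervalIntegrable_of_mem_boundedMeasurable hf) 0
  obtain ⟨C, hC⟩ := hf.2
  exact ⟨hprim.measurable.div measurable_id, C, abs_cesaroMean_le hC⟩

theorem tendsto_cesaroMean_of_bddFun_integral {f : ℝ → ℝ}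
    (hf : BddFun fun u => ∫ v in (0 : ℝ)..u, f v) : Tendsto (cesaroMean f) atTop (𝓝 0) := by
  obtain ⟨K, hK⟩ := hf
  refine squeeze_zero_norm' ?_ (tendsto_id.const_div_atTop K)
  filter_upwards [eventually_gt_atTop 0] with u hu
  rw [cesaroMean, norm_div, Real.norm_of_nonneg hu.le]
  exact div_le_div_of_nonneg_right (hK u) hu.le

theorem absolutelyContinuousOnInterval_cesaroMean_exp {f : ℝ → ℝ} (hf : f ∈ boundedMeasurable)
    (a b : ℝ) : AbsolutelyContinuousOnInterval (fun s => cesaroMean f (Real.exp s)) a b := by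
  obtain ⟨K, hK⟩ := exists_lipschitzWith_integral hf 0
  obtain ⟨K', hK'⟩ := (Real.contDiff_exp.contDiffOn (n := 1)).exists_lipschitzOnWith one_ne_zero
    (convex_uIcc a b) isCompact_uIcc
  have hinv : ContDiff ℝ 1 fun s => (Real.exp s)⁻¹ :=
    Real.contDiff_exp.inv fun s => (Real.exp_pos s).ne'
  exact (hK.comp_lipschitzOnWith hK').absolutelyContinuousOnInterval.mul
    hinv.contDiffOn.absolutelyContinuousOnInterval

theorem ae_hasDerivAt_cesaroMean_exp {f : ℝ → ℝ} (hf : LocallyIntegrable f) :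
    ∀ᵐ s, HasDerivAt (fun s => cesaroMean f (Real.exp s))
      (f (Real.exp s) - cesaroMean f (Real.exp s)) s := by
  filter_upwards
    [quasiMeasurePreserving_exp.ae (LocallyIntegrable.ae_hasDerivAt_integral hf)] with s hs
  have hexp := Real.hasDerivAt_exp s
  have hne := (Real.exp_pos s).ne'
  refine (((hs 0).comp s hexp).div hexp hne).congr_deriv ?_
  simp only [cesaroMean, Function.comp_apply]
  field_simp

theorem integral_cesaroMean_exp_sub {f : ℝ → ℝ} (hf : f ∈ boundedMeasurable) (a b : ℝ) :
    ∫ s in a..b, (cesaroMean f (Real.exp s) - f (Real.exp s)) =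
      cesaroMean f (Real.exp a) - cesaroMean f (Real.exp b) := by
  rw [← neg_sub (cesaroMean f (Real.exp b)),
    ← (absolutelyContinuousOnInterval_cesaroMean_exp hf a b).integral_deriv_eq_sub,
    ← intervalIntegral.integral_neg]
  refine intervalIntegral.integral_congr_ae ?_
  filter_upwards [ae_hasDerivAt_cesaroMean_exp (locallyIntegrable_of_mem_boundedMeasurable hf)]
    with s hs _
  rw [hs.deriv, neg_sub]

theorem bddFun_integral_cesaroMean_exp_sub {f : ℝ → ℝ} (hf : f ∈ boundedMeasurable) :
    BddFun fun t => ∫ s in (0 : ℝ)..t, (cesaroMean f (Real.exp s) - f (Real.exp s)) := by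
  simp only [integral_cesaroMean_exp_sub hf]
  exact (bddFun_const _).sub ((cesaroMean_mem_boundedMeasurable hf).2.comp Real.exp)

/-- `ω` restricts to a state on the bounded measurable functions which depends only on their
behaviour along `l`. Positivity, normalisation and locality are encoded in one inequality. -/
def IsStateAlong (l : Filter ℝ) (ω : (ℝ → ℝ) →ₗ[ℝ] ℝ) : Prop :=
  ∀ f ∈ boundedMeasurable, ∀ b : ℝ, (∀ᶠ x in l, f x ≤ b) → ω f ≤ b

namespace IsStateAlong

variable {l l' : Filter ℝ} {ω : (ℝ → ℝ) →ₗ[ℝ] ℝ} {f : ℝ → ℝ}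

theorem le_apply (hω : IsStateAlong l ω) (hf : f ∈ boundedMeasurable) {b : ℝ}
    (hb : ∀ᶠ x in l, b ≤ f x) : b ≤ ω f := by
  have h := hω (-f) (neg_mem hf) (-b) (hb.mono fun x hx => neg_le_neg hx)
  rwa [map_neg, neg_le_neg_iff] at h

theorem apply_eq_of_tendsto (hω : IsStateAlong l ω) (hf : f ∈ boundedMeasurable) {c : ℝ}
    (hc : Tendsto f l (𝓝 c)) : ω f = c :=
  le_antisymm
    (le_of_forall_gt_imp_ge_of_dense fun b hb =>
      hω f hf b ((hc.eventually_lt_const hb).mono fun _ => le_of_lt))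
    (le_of_forall_lt_imp_le_of_dense fun _ hb =>
      hω.le_apply hf ((hc.eventually_const_lt hb).mono fun _ => le_of_lt))

theorem apply_le_limsup (hω : IsStateAlong l ω) (hf : f ∈ boundedMeasurable) :
    ω f ≤ limsup f l := by
  obtain ⟨C, hC⟩ := hf.2
  have hbdd : IsBoundedUnder (· ≤ ·) l f := isBoundedUnder_of ⟨C, fun x => (abs_le.1 (hC x)).2⟩
  exact le_of_forall_gt_imp_ge_of_dense fun b hb =>
    hω f hf b ((eventually_lt_of_limsup_lt hb hbdd).mono fun _ => le_of_lt)

theorem liminf_le_apply (hω : IsStateAlong l ω) (hf : f ∈ boundedMeasurable) :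
    liminf f l ≤ ω f := by
  obtain ⟨C, hC⟩ := hf.2
  have hbdd : IsBoundedUnder (· ≥ ·) l f := isBoundedUnder_of ⟨-C, fun x => (abs_le.1 (hC x)).1⟩
  exact le_of_forall_lt_imp_le_of_dense fun _ hb =>
    hω.le_apply hf ((eventually_lt_of_lt_liminf hb hbdd).mono fun _ => le_of_lt)

theorem comp_funLeft (hω : IsStateAlong l ω) {φ : ℝ → ℝ} (hφ : Measurable φ)
    (hl : Tendsto φ l l') : IsStateAlong l' (ω ∘ₗ LinearMap.funLeft ℝ ℝ φ) :=
  fun f hf b hb => hω (fun x => f (φ x)) (comp_mem_boundedMeasurable hf hφ) b (hl.eventually hb)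

theorem apply_comp_add_right_of_cesaroMean_invariant (hω : IsStateAlong (atTop ⊓ ae volume) ω)
    (hH : ∀ f ∈ boundedMeasurable, ω (cesaroMean f) = ω f) (hf : f ∈ boundedMeasurable) (c : ℝ) :
    ω (fun x => f (x + c)) = ω f := by
  have hdiff : (fun x => f (x + c)) - f ∈ boundedMeasurable :=
    sub_mem (comp_mem_boundedMeasurable hf (measurable_add_const c)) hf
  have hlim := tendsto_cesaroMean_of_bddFun_integral (bddFun_integral_comp_add_right_sub hf c)
  rw [← sub_eq_zero, ← map_sub, ← hH _ hdiff]
  exact hω.apply_eq_of_tendsto (cesaroMean_mem_boundedMeasurable hdiff)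
    (hlim.mono_left inf_le_left)

end IsStateAlong

/-- `ω` computes the limit along `l` of the Cesàro means of bounded measurable functions. -/
def IsCesaroLimit (l : Filter ℝ) (ω : (ℝ → ℝ) →ₗ[ℝ] ℝ) : Prop :=
  ∀ f ∈ boundedMeasurable, Tendsto (cesaroMean f) l (𝓝 (ω f))

theorem exists_isCesaroLimit (U : Ultrafilter ℝ) : ∃ ω, IsCesaroLimit U ω := by
  let T (u : ℝ) : boundedMeasurable →ₗ[ℝ] ℝ :=
    { toFun := fun f => cesaroMean f u
      map_add' := fun f g => by
        simp only [cesaroMean, Submodule.coe_add, Pi.add_apply, ← add_div]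
        rw [intervalIntegral.integral_add (intervalIntegrable_of_mem_boundedMeasurable f.2 0 u)
          (intervalIntegrable_of_mem_boundedMeasurable g.2 0 u)]
      map_smul' := fun c f => by
        simp only [cesaroMean, Submodule.coe_smul, Pi.smul_apply,
          intervalIntegral.integral_smul, smul_div_assoc, RingHom.id_apply] }
  obtain ⟨L, hL⟩ := exists_linearMap_tendsto_ultrafilter U T fun f =>
    (cesaroMean_mem_boundedMeasurable f.2).2
  obtain ⟨ω, hω⟩ := L.exists_extend
  refine ⟨ω, fun f hf => ?_⟩
  have hωf : ω f = L ⟨f, hf⟩ := LinearMap.congr_fun hω ⟨f, hf⟩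
  rw [hωf]
  exact hL ⟨f, hf⟩

namespace IsCesaroLimit

variable {l : Filter ℝ} [l.NeBot] {ω : (ℝ → ℝ) →ₗ[ℝ] ℝ}

theorem isStateAlong (hω : IsCesaroLimit l ω) (hl : l ≤ atTop) :
    IsStateAlong (atTop ⊓ ae volume) ω := by
  intro f hf b hb
  obtain ⟨K, hK⟩ :=
    exists_eventually_integral_le (locallyIntegrable_of_mem_boundedMeasurable hf) 0 hb
  have hlim : Tendsto (fun u => K / u + b) atTop (𝓝 b) := by
    simpa using (tendsto_id.const_div_atTop K).add_const b
  refine le_of_tendsto_of_tendsto (hω f hf) (hlim.mono_left hl) (hl ?_)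
  filter_upwards [hK, eventually_gt_atTop 0] with u hKu hu
  rw [cesaroMean, div_le_iff₀ hu, add_mul, div_mul_cancel₀ K hu.ne']
  exact hKu

theorem apply_eq_of_bddFun_integral_sub (hω : IsCesaroLimit l ω) (hl : l ≤ atTop) {f g : ℝ → ℝ}
    (hf : f ∈ boundedMeasurable) (hg : g ∈ boundedMeasurable)
    (h : BddFun fun u => ∫ v in (0 : ℝ)..u, (f v - g v)) : ω f = ω g := by
  rw [← sub_eq_zero, ← map_sub]
  exact tendsto_nhds_unique (hω (f - g) (sub_mem hf hg))
    ((tendsto_cesaroMean_of_bddFun_integral h).mono_left hl)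

theorem apply_comp_add_right (hω : IsCesaroLimit l ω) (hl : l ≤ atTop) {f : ℝ → ℝ}
    (hf : f ∈ boundedMeasurable) (c : ℝ) : ω (fun x => f (x + c)) = ω f :=
  hω.apply_eq_of_bddFun_integral_sub hl
    (comp_mem_boundedMeasurable hf (measurable_add_const c)) hf
    (bddFun_integral_comp_add_right_sub hf c)

theorem apply_dilation_comp_exp (hω : IsCesaroLimit l ω) (hl : l ≤ atTop) {f : ℝ → ℝ}
    (hf : f ∈ boundedMeasurable) {a : ℝ} (ha : 0 < a) :
    ω (fun s => f (Real.exp s / a)) = ω (fun s => f (Real.exp s)) := by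
  have hshift (s : ℝ) : Real.exp s / a = Real.exp (s + -Real.log a) := by
    rw [← sub_eq_add_neg, Real.exp_sub, Real.exp_log ha]
  simp only [hshift]
  exact hω.apply_comp_add_right hl (comp_mem_boundedMeasurable hf Real.measurable_exp) _

theorem apply_cesaroMean_comp_exp (hω : IsCesaroLimit l ω) (hl : l ≤ atTop) {f : ℝ → ℝ}
    (hf : f ∈ boundedMeasurable) :
    ω (fun s => cesaroMean f (Real.exp s)) = ω (fun s => f (Real.exp s)) :=
  hω.apply_eq_of_bddFun_integral_sub hl
    (comp_mem_boundedMeasurable (cesaroMean_mem_boundedMeasurable hf) Real.measurable_exp)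
    (comp_mem_boundedMeasurable hf Real.measurable_exp)
    (bddFun_integral_cesaroMean_exp_sub hf)

end IsCesaroLimit

theorem exists_isStateAlong_dilation_cesaroMean_invariant :
    ∃ ω, IsStateAlong (atTop ⊓ ae volume) ω ∧
      (∀ f ∈ boundedMeasurable, ∀ a : ℝ, 0 < a → ω (fun x => f (x / a)) = ω f) ∧
      ∀ f ∈ boundedMeasurable, ω (cesaroMean f) = ω f := by
  have hU : (Ultrafilter.of (atTop : Filter ℝ) : Filter ℝ) ≤ atTop := Ultrafilter.of_le atTop
  obtain ⟨ω, hω⟩ := exists_isCesaroLimit (Ultrafilter.of atTop)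
  exact ⟨ω ∘ₗ LinearMap.funLeft ℝ ℝ Real.exp,
    (hω.isStateAlong hU).comp_funLeft Real.measurable_exp
      (Real.tendsto_exp_atTop.inf quasiMeasurePreserving_exp.tendsto_ae),
    fun _ hf _ ha => hω.apply_dilation_comp_exp hU hf ha,
    fun _ hf => hω.apply_cesaroMean_comp_exp hU hf⟩

theorem tendsto_zero_of_ae_eq_zero_off_isCompact {f : ℝ → ℝ} {K : Set ℝ} (hK : IsCompact K)
    (hf : ∀ᵐ x, x ∉ K → f x = 0) : Tendsto f (atTop ⊓ ae volume) (𝓝 0) := by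
  have hKc : ∀ᶠ x in atTop, x ∉ K := atTop_le_cocompact hK.compl_mem_cocompact
  refine tendsto_const_nhds.congr' ?_
  filter_upwards [hKc.filter_mono inf_le_left, hf.filter_mono inf_le_right] with x hx hfx
  exact (hfx hx).symm

/-- There exists a state `ω̃` on `L∞(ℝ)` (a positive linear functional with `ω̃(1) = 1`)
satisfying: (1) `ω̃` vanishes on continuous functions vanishing at infinity;
(2) `ess liminf_{t→∞} f ≤ ω̃(f) ≤ ess limsup_{t→∞} f` for every bounded measurable `f`;
(3) `ω̃(f) = 0` whenever `f` has compact essential support;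
(4) `ω̃` is invariant under all translations `T_c`, all dilations `D_a` (`a > 0`)
and the Cesàro operator `H`. -/
theorem exists_translation_dilation_cesaro_invariant_state_Linfty :
    ∃ ω : (ℝ → ℝ) →ₗ[ℝ] ℝ,
      -- ω is a state: positive and normalised
      (∀ f : ℝ → ℝ, Measurable f → BddFun f →
        (∀ᵐ x ∂(volume : Measure ℝ), 0 ≤ f x) → 0 ≤ ω f) ∧
      ω (fun _ => 1) = 1 ∧
      -- (1) ω vanishes on continuous functions vanishing at infinity
      (∀ f : ℝ → ℝ, Continuous f → Tendsto f (cocompact ℝ) (nhds 0) → ω f = 0) ∧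
      -- (2) ess liminf at +∞ ≤ ω f ≤ ess limsup at +∞
      (∀ f : ℝ → ℝ, Measurable f → BddFun f →
        liminf f (atTop ⊓ ae (volume : Measure ℝ)) ≤ ω f ∧
          ω f ≤ limsup f (atTop ⊓ ae (volume : Measure ℝ))) ∧
      -- (3) ω vanishes on functions with compact essential support
      (∀ f : ℝ → ℝ, Measurable f → BddFun f →
        (∃ K : Set ℝ, IsCompact K ∧ ∀ᵐ x ∂(volume : Measure ℝ), x ∉ K → f x = 0) →
        ω f = 0) ∧
      -- (4) invariance under translations, dilations and the Cesàro operator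
      (∀ f : ℝ → ℝ, Measurable f → BddFun f →
        (∀ c : ℝ, ω (fun x => f (x + c)) = ω f) ∧
        (∀ a : ℝ, 0 < a → ω (fun x => f (x / a)) = ω f) ∧
        ω (fun u => (∫ v in (0:ℝ)..u, f v) / u) = ω f) := by
  obtain ⟨ω, hω, hD, hH⟩ := exists_isStateAlong_dilation_cesaroMean_invariant
  refine ⟨ω, ?positive, ?normalised, ?vanishing, ?limits, ?support, ?invariance⟩
  case positive =>
    exact fun f hf hb hpos => hω.le_apply ⟨hf, hb⟩ (hpos.filter_mono inf_le_right)
  case normalised =>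
    exact hω.apply_eq_of_tendsto ⟨measurable_const, bddFun_const 1⟩ tendsto_const_nhds
  case vanishing =>
    exact fun f hf h0 => hω.apply_eq_of_tendsto
      ⟨hf.measurable, bddFun_of_tendsto_cocompact hf h0⟩
      (h0.mono_left (inf_le_left.trans atTop_le_cocompact))
  case limits =>
    exact fun f hf hb => ⟨hω.liminf_le_apply ⟨hf, hb⟩, hω.apply_le_limsup ⟨hf, hb⟩⟩
  case support =>
    rintro f hf hb ⟨K, hK, hfK⟩
    exact hω.apply_eq_of_tendsto ⟨hf, hb⟩ (tendsto_zero_of_ae_eq_zero_off_isCompact hK hfK)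
  case invariance =>
    exact fun f hf hb => ⟨hω.apply_comp_add_right_of_cesaroMean_invariant hH ⟨hf, hb⟩,
      hD f ⟨hf, hb⟩, hH f ⟨hf, hb⟩⟩
end

section
/- Let μ : [0,∞) → [0,∞) be nonincreasing, let K > 0 satisfy ∫₀^t μ(s) ds ≤ K·log(1+t) for all t > 0, and set g(t) = (1/log(1+t))∫₀^t μ(s) ds for t > 0, g(0) = 0; g is a bounded continuous function on [0,∞). Define Mg ∈ C_b[0,∞) by (Mg)(t) = (1/log t)∫₁^t g(s) ds/s for t > 1 and (Mg)(t) = g(1) for 0 ≤ t ≤ 1. Then for A ∈ ℝ the following are equivalent: (a) γ(Mg) = A for every positive linear functional γ on C_b[0,∞) with γ(1) = 1 which vanishes on every continuous function vanishing at infinity; (b) lim_{t → ∞} g(t) = A. -/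
open Filter MeasureTheory

/-- `g(t) = (1/log(1+t)) ∫₀^t μ(s) ds` for `t > 0` (and `0` for `t ≤ 0`). -/
noncomputable def gFn (μ : ℝ → ℝ) : ℝ → ℝ := fun t =>
  if 0 < t then (∫ s in (0:ℝ)..t, μ s) / Real.log (1 + t) else 0

/-- `(Mg)(t) = (1/log t) ∫₁^t g(s) ds/s` for `t > 1`, and `(Mg)(t) = g(1)` for `t ≤ 1`. -/
noncomputable def MgFn (μ : ℝ → ℝ) : ℝ → ℝ := fun t =>
  if 1 < t then (∫ s in (1:ℝ)..t, gFn μ s / s) / Real.log t else gFn μ 1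

/-! The limit along an ultrafilter finer than `atTop` is a singular state, so all singular states
take the value `A` on a bounded continuous function exactly when that function tends to `A`; hence
(a) says that `Mg` tends to `A`. If `g` tends to `A`, so do its averages `Mg`.

Conversely, suppose `Mg` tends to `A`. For fixed `c ≠ 1`, the interval between `t` and `t ^ c` has
`ds / s`-length `|c - 1| * log t`, a fixed multiple of `log t`, so the average of `g` over it tends
to `A` as well. As `g t * log (1 + t)` is nondecreasing, this average times
`log (1 + t ^ c) / log (1 + t)` bounds `g t` from above if `c > 1` and from below if `c < 1`. The
bound tends to `A * c`; now let `c` tend to `1`. -/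

open Asymptotics Set Topology

section IntervalIntegral

variable {E : Type*} [NormedAddCommGroup E] {ν : Measure ℝ} {f : ℝ → E} {a b c : ℝ}

theorem intervalIntegrable_of_locallyIntegrableOn_Ici (hf : LocallyIntegrableOn f (Ici a) ν)
    (hb : a ≤ b) (hc : a ≤ c) : IntervalIntegrable f ν b c :=
  (hf.integrableOn_compact_subset (fun _ hx ↦ (le_min hb hc).trans hx.1)
    isCompact_uIcc).intervalIntegrable

theorem continuousOn_primitive_of_locallyIntegrableOn_Ici [NormedSpace ℝ E] [NullSingletonClass ν]
    (hf : LocallyIntegrableOn f (Ici a) ν) :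
    ContinuousOn (fun t ↦ ∫ s in a..t, f s ∂ν) (Ici a) := by
  intro t (ht : a ≤ t)
  have hat : a ≤ t + 1 := by linarith
  have hcont := intervalIntegral.continuousOn_primitive_interval'
    (intervalIntegrable_of_locallyIntegrableOn_Ici hf le_rfl hat) left_mem_uIcc
  rw [uIcc_of_le hat] at hcont
  refine (hcont t ⟨ht, by linarith⟩).mono_of_mem_nhdsWithin ?_
  filter_upwards [self_mem_nhdsWithin, nhdsWithin_le_nhds (Iic_mem_nhds (lt_add_one t))]
    with s has hst using ⟨has, hst⟩

theorem monotoneOn_primitive_of_nonneg {f : ℝ → ℝ} (hf : LocallyIntegrableOn f (Ici a) ν)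
    (hf0 : ∀ s, a ≤ s → 0 ≤ f s) : MonotoneOn (fun t ↦ ∫ s in a..t, f s ∂ν) (Ici a) :=
  fun _ hs _ ht hst ↦ intervalIntegral.integral_mono_interval le_rfl hs hst
    (ae_restrict_of_forall_mem measurableSet_Ioc fun x hx ↦ hf0 x hx.1.le)
    (intervalIntegrable_of_locallyIntegrableOn_Ici hf le_rfl ht)

end IntervalIntegral

section LogMean

/-- The logarithmic mean of `g` between `a` and `b`, i.e. its average with respect to `ds / s`.
It is symmetric in `a` and `b`, and takes the junk value `0` when `a = b`. -/
noncomputable def logMean (g : ℝ → ℝ) (a b : ℝ) : ℝ :=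
  (∫ s in a..b, g s / s) / Real.log (b / a)

variable {g : ℝ → ℝ} {a b c : ℝ}

theorem locallyIntegrableOn_div_id (ha : 0 < a) (hg : LocallyIntegrableOn g (Ici a)) :
    LocallyIntegrableOn (fun s ↦ g s / s) (Ici a) := by
  simpa only [div_eq_mul_inv] using hg.mul_continuousOn
    (continuousOn_inv₀.mono fun s (hs : a ≤ s) ↦ (ha.trans_le hs).ne') isLocallyClosed_Ici

theorem intervalIntegrable_const_div_id (c : ℝ) (ha : 0 < a) (hb : 0 < b) :
    IntervalIntegrable (fun s ↦ c / s) volume a b :=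
  (continuousOn_const.div continuousOn_id fun _ hs ↦
    ((lt_min ha hb).trans_le hs.1).ne').intervalIntegrable

theorem integral_const_div_id (c : ℝ) (ha : 0 < a) (hb : 0 < b) :
    ∫ s in a..b, c / s = c * Real.log (b / a) := by
  simp only [div_eq_mul_inv c, intervalIntegral.integral_const_mul, integral_inv_of_pos ha hb]

theorem logMean_symm (g : ℝ → ℝ) (a b : ℝ) : logMean g a b = logMean g b a := by
  rw [logMean, logMean, intervalIntegral.integral_symm, ← inv_div a b, Real.log_inv, neg_div_neg_eq]

theorem logMean_neg (g : ℝ → ℝ) (a b : ℝ) : logMean (-g) a b = -logMean g a b := by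
  simp only [logMean, Pi.neg_apply, neg_div, intervalIntegral.integral_neg]

theorem log_mul_logMean (g : ℝ → ℝ) (ha : 0 < a) (hb : 0 < b) :
    Real.log (b / a) * logMean g a b = ∫ s in a..b, g s / s := by
  rcases eq_or_ne a b with rfl | hab
  · simp [logMean]
  · refine mul_div_cancel₀ _ (Real.log_ne_zero_of_pos_of_ne_one (div_pos hb ha) ?_)
    rwa [ne_eq, div_eq_one_iff_eq ha.ne', eq_comm]

theorem log_mul_logMean_add (ha : 0 < a) (hb : 0 < b) (hc : 0 < c)
    (hab : IntervalIntegrable (fun s ↦ g s / s) volume a b)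
    (hbc : IntervalIntegrable (fun s ↦ g s / s) volume b c) :
    Real.log (b / a) * logMean g a b + Real.log (c / b) * logMean g b c =
      Real.log (c / a) * logMean g a c := by
  rw [log_mul_logMean g ha hb, log_mul_logMean g hb hc, log_mul_logMean g ha hc,
    intervalIntegral.integral_add_adjacent_intervals hab hbc]

theorem le_logMean {m : ℝ} (ha : 0 < a) (hb : 0 < b) (hab : a ≠ b)
    (hg : IntervalIntegrable (fun s ↦ g s / s) volume a b) (hm : ∀ s ∈ uIcc a b, m ≤ g s) :
    m ≤ logMean g a b := by
  wlog hlt : a < b generalizing a b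
  · rw [logMean_symm]
    exact this hb ha hab.symm hg.symm (by rwa [uIcc_comm])
      (lt_of_le_of_ne (not_lt.1 hlt) hab.symm)
  · rw [logMean, le_div_iff₀ (Real.log_pos ((one_lt_div ha).2 hlt)),
      ← integral_const_div_id m ha hb]
    refine intervalIntegral.integral_mono_on hlt.le (intervalIntegrable_const_div_id m ha hb) hg
      fun s hs ↦ ?_
    have := ha.trans_le hs.1
    gcongr
    exact hm s (Icc_subset_uIcc hs)

theorem logMean_le {M : ℝ} (ha : 0 < a) (hb : 0 < b) (hab : a ≠ b)
    (hg : IntervalIntegrable (fun s ↦ g s / s) volume a b) (hM : ∀ s ∈ uIcc a b, g s ≤ M) :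
    logMean g a b ≤ M := by
  have hneg : IntervalIntegrable (fun s ↦ (-g) s / s) volume a b := by
    simpa only [Pi.neg_apply, neg_div] using! hg.neg
  have := le_logMean ha hb hab hneg fun s hs ↦ neg_le_neg (hM s hs)
  rwa [logMean_neg, neg_le_neg_iff] at this

theorem continuousOn_logMean (ha : 0 < a) (hg : LocallyIntegrableOn g (Ici a)) :
    ContinuousOn (logMean g a) (Ioi a) := by
  refine ((continuousOn_primitive_of_locallyIntegrableOn_Ici
    (locallyIntegrableOn_div_id ha hg)).mono Ioi_subset_Ici_self).div ?_ ?_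
  · exact (continuousOn_id.div_const a).log fun t (ht : a < t) ↦ (div_pos (ha.trans ht) ha).ne'
  · exact fun t (ht : a < t) ↦ (Real.log_pos ((one_lt_div ha).2 ht)).ne'

theorem tendsto_logMean_nhdsGT (ha : 0 < a) (hg : LocallyIntegrableOn g (Ici a))
    (hcont : ContinuousWithinAt g (Ici a) a) :
    Tendsto (logMean g a) (𝓝[>] a) (𝓝 (g a)) := by
  rw [Metric.nhds_basis_closedBall.tendsto_right_iff]
  intro ε hε
  have hball : {s | g s ∈ Metric.closedBall (g a) ε} ∈ 𝓝[≥] a :=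
    hcont (Metric.closedBall_mem_nhds _ hε)
  obtain ⟨b, hab, hb⟩ := mem_nhdsGE_iff_exists_Icc_subset.1 hball
  filter_upwards [Ioc_mem_nhdsGT hab] with t ht
  have hint : IntervalIntegrable (fun s ↦ g s / s) volume a t :=
    intervalIntegrable_of_locallyIntegrableOn_Ici (locallyIntegrableOn_div_id ha hg) le_rfl ht.1.le
  have hmem : ∀ s ∈ uIcc a t, g s ∈ Icc (g a - ε) (g a + ε) := by
    intro s hs
    rw [uIcc_of_le ht.1.le] at hs
    rw [← Real.closedBall_eq_Icc]
    exact hb ⟨hs.1, hs.2.trans ht.2⟩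
  rw [Real.closedBall_eq_Icc]
  exact ⟨le_logMean ha (ha.trans ht.1) ht.1.ne hint fun s hs ↦ (hmem s hs).1,
    logMean_le ha (ha.trans ht.1) ht.1.ne hint fun s hs ↦ (hmem s hs).2⟩

theorem continuous_ite_logMean (ha : 0 < a) (hg : ContinuousOn g (Ici a)) :
    Continuous fun t ↦ if a < t then logMean g a t else g a := by
  have hint : LocallyIntegrableOn g (Ici a) := hg.locallyIntegrableOn measurableSet_Ici
  refine continuous_iff_continuousAt.2 fun t ↦ ?_
  rcases lt_trichotomy t a with hta | rfl | hat
  · refine (continuousAt_const (y := g a)).congr ?_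
    filter_upwards [Iio_mem_nhds hta] with s hs using (if_neg (not_lt_of_gt hs)).symm
  · refine continuousAt_iff_continuous_left'_right'.2 ⟨?_, ?_⟩
    · refine (continuousWithinAt_const (b := g t)).congr (fun s hs ↦ ?_) (if_neg (lt_irrefl t))
      exact if_neg (not_lt_of_gt hs)
    · rw [ContinuousWithinAt, if_neg (lt_irrefl t)]
      refine (tendsto_logMean_nhdsGT ha hint (hg t self_mem_Ici)).congr' ?_
      filter_upwards [self_mem_nhdsWithin] with s hs using (if_pos hs).symm
  · refine ((continuousOn_logMean ha hint).continuousAt (Ioi_mem_nhds hat)).congr ?_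
    filter_upwards [Ioi_mem_nhds hat] with s hs using (if_pos hs).symm

theorem eventually_lt_logMean {m : ℝ} (ha : 0 < a) (hg : LocallyIntegrableOn g (Ici a))
    (hm : ∀ᶠ s in atTop, m ≤ g s) (hb : b < m) : ∀ᶠ t in atTop, b < logMean g a t := by
  have hdiv := locallyIntegrableOn_div_id ha hg
  obtain ⟨T, hT⟩ := eventually_atTop.1 hm
  set T' := max T a
  have haT : a ≤ T' := le_max_right T a
  have hlog : Tendsto (fun t ↦ Real.log (t / a)) atTop atTop :=
    Real.tendsto_log_atTop.comp (tendsto_id.atTop_div_const ha)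
  have hlim : Tendsto (fun t ↦ Real.log (T' / a) * (logMean g a T' - m) / Real.log (t / a) + m)
      atTop (𝓝 m) := by
    simpa only [zero_add] using (hlog.const_div_atTop _).add_const m
  filter_upwards [hlim.eventually_const_lt hb, eventually_gt_atTop T'] with t hbt hTt
  have hT0 := ha.trans_le haT
  have ht0 := hT0.trans hTt
  have hat := haT.trans hTt.le
  have hlog_at : 0 < Real.log (t / a) := Real.log_pos ((one_lt_div ha).2 (haT.trans_lt hTt))
  have htail_int := intervalIntegrable_of_locallyIntegrableOn_Ici hdiv haT hat
  have htail : m ≤ logMean g T' t := le_logMean hT0 ht0 hTt.ne htail_int fun s hs ↦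
    hT s ((le_max_left T a).trans ((uIcc_of_le hTt.le ▸ hs).1))
  have hsplit := log_mul_logMean_add ha hT0 ht0
    (intervalIntegrable_of_locallyIntegrableOn_Ici hdiv le_rfl haT) htail_int
  have hlog_add : Real.log (T' / a) + Real.log (t / T') = Real.log (t / a) := by
    rw [← Real.log_mul (by positivity) (by positivity), mul_comm, div_mul_div_cancel₀ hT0.ne']
  refine hbt.trans_le ?_
  rw [div_add' _ _ _ hlog_at.ne', div_le_iff₀' hlog_at, ← hsplit, ← hlog_add]
  have := mul_le_mul_of_nonneg_left htail (Real.log_nonneg ((one_le_div hT0).2 hTt.le))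
  linarith

theorem tendsto_logMean_atTop {A : ℝ} (ha : 0 < a) (hg : LocallyIntegrableOn g (Ici a))
    (h : Tendsto g atTop (𝓝 A)) : Tendsto (logMean g a) atTop (𝓝 A) := by
  refine tendsto_order.2 ⟨fun b hb ↦ ?_, fun b hb ↦ ?_⟩
  · obtain ⟨m, hbm, hmA⟩ := exists_between hb
    exact eventually_lt_logMean ha hg (h.eventually_const_le hmA) hbm
  · obtain ⟨M, hAM, hMb⟩ := exists_between hb
    have hneg : ∀ᶠ s in atTop, -M ≤ (-g) s :=
      (h.eventually_le_const hAM).mono fun _ ↦ neg_le_neg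
    filter_upwards [eventually_lt_logMean ha hg.neg hneg (neg_lt_neg hMb)] with t ht
    rwa [logMean_neg, neg_lt_neg_iff] at ht

end LogMean

section Tauberian

variable {g w : ℝ → ℝ} {A c x y : ℝ}

theorem tendsto_comp_rpow_div_of_isEquivalent_log (hw : w ~[atTop] Real.log) (hc : 0 < c) :
    Tendsto (fun t ↦ w (t ^ c) / w t) atTop (𝓝 c) := by
  have hquot := (hw.comp_tendsto (tendsto_rpow_atTop hc)).div hw
  refine (isEquivalent_const_iff_tendsto hc.ne').1 (hquot.congr_right ?_)
  filter_upwards [eventually_gt_atTop 1] with t ht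
  simp only [Pi.div_apply, Function.comp_apply, Real.log_rpow (zero_lt_one.trans ht)]
  exact mul_div_cancel_right₀ c (Real.log_pos ht).ne'

theorem isEquivalent_log_one_add : (fun t ↦ Real.log (1 + t)) ~[atTop] Real.log := by
  have hbdd : (fun t ↦ Real.log (t + 1) - Real.log t) =O[atTop] fun _ ↦ (1 : ℝ) :=
    (Real.tendsto_log_comp_add_sub_log 1).isBigO_one ℝ
  simpa only [IsEquivalent, add_comm] using! hbdd.trans_isLittleO Real.isLittleO_const_log_atTop

theorem tendsto_logMean_self_rpow (hg : LocallyIntegrableOn g (Ici 1))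
    (h : Tendsto (logMean g 1) atTop (𝓝 A)) (hc : 0 < c) (hc1 : c ≠ 1) :
    Tendsto (fun t ↦ logMean g t (t ^ c)) atTop (𝓝 A) := by
  have hsub : c - 1 ≠ 0 := sub_ne_zero.2 hc1
  have hlim : Tendsto (fun t ↦ (c * logMean g 1 (t ^ c) - logMean g 1 t) / (c - 1)) atTop
      (𝓝 ((c * A - A) / (c - 1))) :=
    (((h.comp (tendsto_rpow_atTop hc)).const_mul c).sub h).div_const (c - 1)
  rw [show (c * A - A) / (c - 1) = A by field_simp] at hlim
  refine hlim.congr' ?_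
  filter_upwards [eventually_gt_atTop 1] with t ht
  have ht0 : 0 < t := zero_lt_one.trans ht
  have htc : 1 ≤ t ^ c := Real.one_le_rpow ht.le hc.le
  have hdiv := locallyIntegrableOn_div_id one_pos hg
  have hsplit := log_mul_logMean_add one_pos ht0 (zero_lt_one.trans_le htc)
    (intervalIntegrable_of_locallyIntegrableOn_Ici hdiv le_rfl ht.le)
    (intervalIntegrable_of_locallyIntegrableOn_Ici hdiv ht.le htc)
  rw [div_one, div_one, Real.log_div (by positivity) ht0.ne', Real.log_rpow ht0] at hsplit
  rw [div_eq_iff hsub]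
  refine mul_left_cancel₀ (Real.log_pos ht).ne' ?_
  linear_combination -hsplit

theorem le_logMean_mul_of_monotoneOn (hx : 0 < x) (hxy : x < y)
    (hg : IntervalIntegrable (fun s ↦ g s / s) volume x y) (hg0 : ∀ s ∈ Icc x y, 0 ≤ g s)
    (hwx : 0 < w x) (hw : MonotoneOn w (Icc x y))
    (hgw : MonotoneOn (fun s ↦ g s * w s) (Icc x y)) :
    g x ≤ logMean g x y * (w y / w x) := by
  have hx_mem : x ∈ Icc x y := left_mem_Icc.2 hxy.le
  have hy_mem : y ∈ Icc x y := right_mem_Icc.2 hxy.le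
  have hwy : 0 < w y := hwx.trans_le (hw hx_mem hy_mem hxy.le)
  have hmean : g x * w x / w y ≤ logMean g x y := by
    refine le_logMean hx (hx.trans hxy) hxy.ne hg fun s hs ↦ ?_
    rw [uIcc_of_le hxy.le] at hs
    rw [div_le_iff₀ hwy]
    calc g x * w x ≤ g s * w s := hgw hx_mem hs hs.1
      _ ≤ g s * w y := mul_le_mul_of_nonneg_left (hw hs hy_mem hs.2) (hg0 s hs)
  calc g x = g x * w x / w y * (w y / w x) := by field_simp
    _ ≤ logMean g x y * (w y / w x) := by gcongr

theorem logMean_mul_le_of_monotoneOn (hx : 0 < x) (hxy : x < y)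
    (hg : IntervalIntegrable (fun s ↦ g s / s) volume x y) (hg0 : ∀ s ∈ Icc x y, 0 ≤ g s)
    (hwx : 0 < w x) (hw : MonotoneOn w (Icc x y))
    (hgw : MonotoneOn (fun s ↦ g s * w s) (Icc x y)) :
    logMean g x y * (w x / w y) ≤ g y := by
  have hx_mem : x ∈ Icc x y := left_mem_Icc.2 hxy.le
  have hy_mem : y ∈ Icc x y := right_mem_Icc.2 hxy.le
  have hwy : 0 < w y := hwx.trans_le (hw hx_mem hy_mem hxy.le)
  have hmean : logMean g x y ≤ g y * w y / w x := by
    refine logMean_le hx (hx.trans hxy) hxy.ne hg fun s hs ↦ ?_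
    rw [uIcc_of_le hxy.le] at hs
    rw [le_div_iff₀ hwx]
    calc g s * w x ≤ g s * w s := mul_le_mul_of_nonneg_left (hw hx_mem hs hs.1) (hg0 s hs)
      _ ≤ g y * w y := hgw hs hy_mem hs.2
  calc logMean g x y * (w x / w y) ≤ g y * w y / w x * (w x / w y) := by gcongr
    _ = g y := by field_simp

theorem tendsto_of_tendsto_logMean (hg : LocallyIntegrableOn g (Ici 1))
    (hg0 : ∀ t, 1 < t → 0 ≤ g t) (hw0 : ∀ t, 1 < t → 0 < w t) (hw : MonotoneOn w (Ioi 1))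
    (hw_log : w ~[atTop] Real.log) (hgw : MonotoneOn (fun t ↦ g t * w t) (Ioi 1))
    (h : Tendsto (logMean g 1) atTop (𝓝 A)) : Tendsto g atTop (𝓝 A) := by
  have hwindow (c : ℝ) (hc : 0 < c) (hc1 : c ≠ 1) :
      Tendsto (fun t ↦ logMean g t (t ^ c) * (w (t ^ c) / w t)) atTop (𝓝 (A * c)) :=
    (tendsto_logMean_self_rpow hg h hc hc1).mul
      (tendsto_comp_rpow_div_of_isEquivalent_log hw_log hc)
  have hsub {x y : ℝ} (hx : 1 < x) : Icc x y ⊆ Ioi 1 := fun s hs ↦ hx.trans_le hs.1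
  have hint {x y : ℝ} (hx : 1 < x) (hxy : x < y) :
      IntervalIntegrable (fun s ↦ g s / s) volume x y :=
    intervalIntegrable_of_locallyIntegrableOn_Ici (locallyIntegrableOn_div_id one_pos hg) hx.le
      (hx.trans hxy).le
  have hscale : Tendsto (fun c : ℝ ↦ A * c) (𝓝 1) (𝓝 A) := by
    simpa only [mul_one] using (continuous_const_mul A).tendsto 1
  refine tendsto_order.2 ⟨fun b hb ↦ ?_, fun b hb ↦ ?_⟩
  · obtain ⟨c, ⟨hbc, hc0⟩, hc1 : c < 1⟩ :=
      (((hscale.mono_left nhdsWithin_le_nhds).eventually_const_lt hb).and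
        (nhdsWithin_le_nhds (Ioi_mem_nhds one_pos))).and self_mem_nhdsWithin
        |>.exists (f := 𝓝[<] 1)
    filter_upwards [(hwindow c hc0 hc1.ne).eventually_const_lt hbc, eventually_gt_atTop 1]
      with t hbt ht
    rw [logMean_symm] at hbt
    have htc : 1 < t ^ c := Real.one_lt_rpow ht hc0
    have htct : t ^ c < t := Real.rpow_lt_self_of_one_lt ht hc1
    exact hbt.trans_le <| logMean_mul_le_of_monotoneOn (one_pos.trans htc) htct (hint htc htct)
      (fun s hs ↦ hg0 s (hsub htc hs)) (hw0 _ htc) (hw.mono (hsub htc)) (hgw.mono (hsub htc))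
  · obtain ⟨c, hbc, hc1 : 1 < c⟩ :=
      ((hscale.mono_left nhdsWithin_le_nhds).eventually_lt_const hb).and self_mem_nhdsWithin
        |>.exists (f := 𝓝[>] 1)
    filter_upwards [(hwindow c (zero_lt_one.trans hc1) hc1.ne').eventually_lt_const hbc,
      eventually_gt_atTop 1] with t hbt ht
    have httc : t < t ^ c := Real.self_lt_rpow_of_one_lt ht hc1
    refine lt_of_le_of_lt ?_ hbt
    exact le_logMean_mul_of_monotoneOn (one_pos.trans ht) httc (hint ht httc)
      (fun s hs ↦ hg0 s (hsub ht hs)) (hw0 t ht) (hw.mono (hsub ht)) (hgw.mono (hsub ht))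

end Tauberian

section SingularState

theorem exists_tendsto_of_eventually_abs_le {α : Type*} (U : Ultrafilter α) {f : α → ℝ} {B : ℝ}
    (hf : ∀ᶠ x in U, |f x| ≤ B) : ∃ L, Tendsto f U (𝓝 L) := by
  have hmem : ∀ᶠ x in U, f x ∈ Icc (-B) B := hf.mono fun _ ↦ abs_le.1
  obtain ⟨L, -, hL⟩ := isCompact_Icc.ultrafilter_le_nhds (U.map f) (le_principal_iff.2 hmem)
  exact ⟨L, hL⟩

theorem exists_linearMap_eq_of_tendsto (𝕜 : Type*) {α E : Type*} [DivisionRing 𝕜]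
    [AddCommGroup E] [Module 𝕜 E] [TopologicalSpace E] [T2Space E] [ContinuousAdd E]
    [ContinuousConstSMul 𝕜 E] (l : Filter α) [l.NeBot] :
    ∃ γ : (α → E) →ₗ[𝕜] E, ∀ f L, Tendsto f l (𝓝 L) → γ f = L := by
  let convergent : Submodule 𝕜 (α → E) :=
    { carrier := {f | ∃ L, Tendsto f l (𝓝 L)}
      add_mem' := fun ⟨L, hf⟩ ⟨M, hg⟩ ↦ ⟨L + M, hf.add hg⟩
      zero_mem' := ⟨0, tendsto_const_nhds⟩
      smul_mem' := fun c _ ⟨L, hf⟩ ↦ ⟨c • L, hf.const_smul c⟩ }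
  have hlim (f : convergent) : Tendsto (f : α → E) l (𝓝 (limUnder l f)) :=
    tendsto_nhds_limUnder f.2
  let limit : convergent →ₗ[𝕜] E :=
    { toFun := fun f ↦ limUnder l f
      map_add' := fun f g ↦ ((hlim f).add (hlim g)).limUnder_eq
      map_smul' := fun c f ↦ ((hlim f).const_smul c).limUnder_eq }
  obtain ⟨γ, hγ⟩ := limit.exists_extend
  exact ⟨γ, fun f L hf ↦ (LinearMap.congr_fun hγ ⟨f, L, hf⟩).trans hf.limUnder_eq⟩

/-- A singular state on `C_b[0,∞)`. It is encoded as a linear functional on all functions `ℝ → ℝ`,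
constrained only through its values on functions that are continuous and bounded on `[0,∞)`. -/
structure IsSingularState (γ : (ℝ → ℝ) →ₗ[ℝ] ℝ) : Prop where
  nonneg : ∀ h : ℝ → ℝ, ContinuousOn h (Ici 0) → (∃ B : ℝ, ∀ x : ℝ, 0 ≤ x → |h x| ≤ B) →
    (∀ x : ℝ, 0 ≤ x → 0 ≤ h x) → 0 ≤ γ h
  map_one : γ (fun _ ↦ 1) = 1
  map_eq_zero : ∀ h : ℝ → ℝ, ContinuousOn h (Ici 0) → Tendsto h atTop (𝓝 0) → γ h = 0

variable {f : ℝ → ℝ} {A B : ℝ}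

theorem IsSingularState.map_eq_of_tendsto {γ : (ℝ → ℝ) →ₗ[ℝ] ℝ} (hγ : IsSingularState γ)
    (hf : ContinuousOn f (Ici 0)) (h : Tendsto f atTop (𝓝 A)) : γ f = A := by
  have hdiff : γ (f - A • fun _ ↦ (1 : ℝ)) = 0 := by
    refine hγ.map_eq_zero _ (hf.sub (continuousOn_const.const_smul A)) ?_
    simpa [Pi.sub_def] using h.sub_const A
  rwa [map_sub, map_smul, hγ.map_one, smul_eq_mul, mul_one, sub_eq_zero] at hdiff

theorem exists_isSingularState_eq_of_tendsto (U : Ultrafilter ℝ) (hU : (U : Filter ℝ) ≤ atTop) :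
    ∃ γ, IsSingularState γ ∧ ∀ f L, Tendsto f U (𝓝 L) → γ f = L := by
  obtain ⟨γ, hγ⟩ := exists_linearMap_eq_of_tendsto ℝ (E := ℝ) (U : Filter ℝ)
  have hIci : ∀ᶠ x in (U : Filter ℝ), 0 ≤ x := hU (eventually_ge_atTop 0)
  refine ⟨γ, ⟨?_, hγ _ _ tendsto_const_nhds, fun f _ hf ↦ hγ f 0 (hf.mono_left hU)⟩, hγ⟩
  rintro f - ⟨B, hB⟩ hf0
  obtain ⟨L, hL⟩ := exists_tendsto_of_eventually_abs_le U (hIci.mono hB)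
  exact (hγ f L hL).symm ▸ ge_of_tendsto hL (hIci.mono hf0)

theorem tendsto_of_forall_isSingularState_eq (hf : ∀ᶠ x in atTop, |f x| ≤ B)
    (h : ∀ γ, IsSingularState γ → γ f = A) : Tendsto f atTop (𝓝 A) := by
  refine (tendsto_iff_ultrafilter _ _ _).2 fun U hU ↦ ?_
  obtain ⟨γ, hγ, hγ_lim⟩ := exists_isSingularState_eq_of_tendsto U hU
  obtain ⟨L, hL⟩ := exists_tendsto_of_eventually_abs_le U (hU hf)
  rwa [← h γ hγ, hγ_lim f L hL]

theorem forall_isSingularState_eq_iff_tendsto (hf : ContinuousOn f (Ici 0))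
    (hfB : ∀ᶠ x in atTop, |f x| ≤ B) :
    (∀ γ, IsSingularState γ → γ f = A) ↔ Tendsto f atTop (𝓝 A) :=
  ⟨tendsto_of_forall_isSingularState_eq hfB, fun h _ hγ ↦ hγ.map_eq_of_tendsto hf h⟩

end SingularState

section CesaroMean

variable {μ : ℝ → ℝ} {K A t : ℝ}

theorem gFn_of_pos (μ : ℝ → ℝ) (ht : 0 < t) :
    gFn μ t = (∫ s in (0 : ℝ)..t, μ s) / Real.log (1 + t) :=
  if_pos ht

theorem log_one_add_pos (ht : 0 < t) : 0 < Real.log (1 + t) :=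
  Real.log_pos (by linarith)

theorem gFn_nonneg (hμ0 : ∀ s, 0 ≤ s → 0 ≤ μ s) (ht : 0 < t) : 0 ≤ gFn μ t := by
  rw [gFn_of_pos μ ht]
  exact div_nonneg (intervalIntegral.integral_nonneg ht.le fun s hs ↦ hμ0 s hs.1)
    (log_one_add_pos ht).le

theorem gFn_le (ht : 0 < t) (hK : (∫ s in (0 : ℝ)..t, μ s) ≤ K * Real.log (1 + t)) :
    gFn μ t ≤ K := by
  rwa [gFn_of_pos μ ht, div_le_iff₀ (log_one_add_pos ht)]

theorem continuousOn_gFn (hμ : LocallyIntegrableOn μ (Ici 0)) : ContinuousOn (gFn μ) (Ioi 0) := by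
  have hlog : ContinuousOn (fun t ↦ Real.log (1 + t)) (Ioi 0) :=
    (continuousOn_const.add continuousOn_id).log fun t (ht : 0 < t) ↦
      (add_pos one_pos ht).ne'
  exact (((continuousOn_primitive_of_locallyIntegrableOn_Ici hμ).mono Ioi_subset_Ici_self).div hlog
    fun t ht ↦ (log_one_add_pos ht).ne').congr fun t ht ↦ gFn_of_pos μ ht

theorem locallyIntegrableOn_gFn (hμ : LocallyIntegrableOn μ (Ici 0)) :
    LocallyIntegrableOn (gFn μ) (Ici 1) :=
  ((continuousOn_gFn hμ).locallyIntegrableOn measurableSet_Ioi).mono_set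
    (Ici_subset_Ioi.2 one_pos)

theorem monotoneOn_gFn_mul_log (hμ0 : ∀ s, 0 ≤ s → 0 ≤ μ s)
    (hμ : LocallyIntegrableOn μ (Ici 0)) :
    MonotoneOn (fun t ↦ gFn μ t * Real.log (1 + t)) (Ioi 0) :=
  ((monotoneOn_primitive_of_nonneg hμ hμ0).mono Ioi_subset_Ici_self).congr fun t ht ↦ by
    simp only [gFn_of_pos μ ht, div_mul_cancel₀ _ (log_one_add_pos ht).ne']

theorem mgFn_eq_ite_logMean (μ : ℝ → ℝ) :
    MgFn μ = fun t ↦ if 1 < t then logMean (gFn μ) 1 t else gFn μ 1 := by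
  simp only [logMean, div_one]
  rfl

theorem mgFn_eventuallyEq_logMean (μ : ℝ → ℝ) : MgFn μ =ᶠ[atTop] logMean (gFn μ) 1 := by
  filter_upwards [eventually_gt_atTop 1] with t ht
  simp only [mgFn_eq_ite_logMean, if_pos ht]

theorem eventually_abs_mgFn_le (hμ0 : ∀ s, 0 ≤ s → 0 ≤ μ s) (hμ : LocallyIntegrableOn μ (Ici 0))
    (hK : ∀ t, 0 < t → (∫ s in (0 : ℝ)..t, μ s) ≤ K * Real.log (1 + t)) :
    ∀ᶠ t in atTop, |MgFn μ t| ≤ K := by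
  have hg := locallyIntegrableOn_gFn hμ
  filter_upwards [mgFn_eventuallyEq_logMean μ, eventually_gt_atTop 1] with t htM ht
  have hint : IntervalIntegrable (fun s ↦ gFn μ s / s) volume 1 t :=
    intervalIntegrable_of_locallyIntegrableOn_Ici (locallyIntegrableOn_div_id one_pos hg) le_rfl
      ht.le
  have hpos (s : ℝ) (hs : s ∈ uIcc 1 t) : 0 < s :=
    one_pos.trans_le (uIcc_of_le ht.le ▸ hs).1
  have hnonneg : 0 ≤ logMean (gFn μ) 1 t := le_logMean one_pos (one_pos.trans ht) ht.ne hint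
    fun s hs ↦ gFn_nonneg hμ0 (hpos s hs)
  rw [htM, abs_of_nonneg hnonneg]
  exact logMean_le one_pos (one_pos.trans ht) ht.ne hint
    fun s hs ↦ gFn_le (hpos s hs) (hK s (hpos s hs))

theorem tendsto_mgFn_iff_tendsto_gFn (hμ0 : ∀ s, 0 ≤ s → 0 ≤ μ s)
    (hμ : LocallyIntegrableOn μ (Ici 0)) :
    Tendsto (MgFn μ) atTop (𝓝 A) ↔ Tendsto (gFn μ) atTop (𝓝 A) := by
  have hIoi : Ioi (1 : ℝ) ⊆ Ioi 0 := Ioi_subset_Ioi zero_le_one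
  have hg := locallyIntegrableOn_gFn hμ
  have hlog : MonotoneOn (fun t ↦ Real.log (1 + t)) (Ioi 1) := fun s hs t _ hst ↦
    Real.log_le_log (add_pos one_pos (hIoi hs)) (add_le_add_right hst 1)
  rw [tendsto_congr' (mgFn_eventuallyEq_logMean μ)]
  exact ⟨tendsto_of_tendsto_logMean hg (fun t ht ↦ gFn_nonneg hμ0 (hIoi ht))
    (fun t ht ↦ log_one_add_pos (hIoi ht)) hlog isEquivalent_log_one_add
    ((monotoneOn_gFn_mul_log hμ0 hμ).mono hIoi), tendsto_logMean_atTop one_pos hg⟩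

theorem connes_dixmier_measurable_iff_cesaro_limit_general (μ : ℝ → ℝ)
    (hμ0 : ∀ s, 0 ≤ s → 0 ≤ μ s) (hμ : LocallyIntegrableOn μ (Ici 0)) (K : ℝ)
    (hK : ∀ t, 0 < t → (∫ s in (0 : ℝ)..t, μ s) ≤ K * Real.log (1 + t)) (A : ℝ) :
    (∀ γ, IsSingularState γ → γ (MgFn μ) = A) ↔ Tendsto (gFn μ) atTop (𝓝 A) := by
  have hg : ContinuousOn (gFn μ) (Ici 1) := (continuousOn_gFn hμ).mono (Ici_subset_Ioi.2 one_pos)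
  have hMg : Continuous (MgFn μ) :=
    mgFn_eq_ite_logMean μ ▸ continuous_ite_logMean one_pos hg
  rw [forall_isSingularState_eq_iff_tendsto hMg.continuousOn (eventually_abs_mgFn_le hμ0 hμ hK),
    tendsto_mgFn_iff_tendsto_gFn hμ0 hμ]

end CesaroMean

/-- For a nonincreasing `μ : [0,∞) → [0,∞)` with `∫₀^t μ ≤ K log(1+t)`,
`g(t) = (1/log(1+t))∫₀^t μ(s) ds` and `Mg` its logarithmic Cesàro mean, the following are
equivalent: (a) `γ(Mg) = A` for every positive linear functional `γ` on `C_b[0,∞)` with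
`γ(1) = 1` vanishing on every continuous function vanishing at infinity (i.e. every
singular state); (b) `lim_{t→∞} g(t) = A`. -/
theorem connes_dixmier_measurable_iff_cesaro_limit (μ : ℝ → ℝ)
    (hμ0 : ∀ s : ℝ, 0 ≤ s → 0 ≤ μ s) (hmono : AntitoneOn μ (Set.Ici 0))
    (K : ℝ) (hK : 0 < K)
    (hint : ∀ t : ℝ, 0 < t → (∫ s in (0:ℝ)..t, μ s) ≤ K * Real.log (1 + t))
    (A : ℝ) :
    (∀ γ : (ℝ → ℝ) →ₗ[ℝ] ℝ,
        -- γ is positive on C_b[0,∞)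
        (∀ h : ℝ → ℝ, ContinuousOn h (Set.Ici 0) → (∃ B : ℝ, ∀ x : ℝ, 0 ≤ x → |h x| ≤ B) →
          (∀ x : ℝ, 0 ≤ x → 0 ≤ h x) → 0 ≤ γ h) →
        -- γ(1) = 1
        γ (fun _ => 1) = 1 →
        -- γ is singular: it vanishes on continuous functions vanishing at infinity
        (∀ h : ℝ → ℝ, ContinuousOn h (Set.Ici 0) → Tendsto h atTop (nhds 0) → γ h = 0) →
        γ (MgFn μ) = A) ↔
      Tendsto (gFn μ) atTop (nhds A) := by
  have hμ : LocallyIntegrableOn μ (Ici 0) :=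
    (locallyIntegrableOn_iff isLocallyClosed_Ici).2 fun _ hs hcompact ↦
      (hmono.mono hs).integrableOn_isCompact hcompact
  rw [← connes_dixmier_measurable_iff_cesaro_limit_general μ hμ0 hμ K hint A]
  exact ⟨fun h γ hγ ↦ h γ hγ.nonneg hγ.map_one hγ.map_eq_zero,
    fun h γ hpos hone hzero ↦ h γ ⟨hpos, hone, hzero⟩⟩
end

section
/- Let μ : [0,∞) → [0,∞) be nonincreasing and let K > 0 be such that ∫₀^t μ(s) ds ≤ K ∫₀^t ds/(1+s) for every t > 0. Then for every real p ≥ 1 and every t > 0, ∫₀^t μ(s)^p ds ≤ K^p ∫₀^t ds/(1+s)^p. -/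
open MeasureTheory

/-!
A nonnegative nonincreasing weight `w` is an average of indicators of initial segments (its
superlevel sets), so `∫ w (g - f) ≥ 0` as soon as `∫ f ≤ ∫ g` on all initial segments. For `φ`
convex and nondecreasing with right derivative `φ'`, and `f` nonincreasing, take `w = φ' ∘ f`:
integrating the tangent line inequality `φ' (f s) * (g s - f s) ≤ φ (g s) - φ (f s)` then gives
the Hardy–Littlewood–Pólya inequality `∫ φ ∘ f ≤ ∫ φ ∘ g`. The theorem is the case
`φ x = max x 0 ^ p`, where truncation at `0` makes `φ` convex and monotone on all of `ℝ`, so that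
no one-sided derivative at a boundary point is needed.
-/

open Set

lemma exists_ae_eq_Ioc_of_forall_Ioc_subset {α : Type*} [ConditionallyCompleteLinearOrder α]
    [MeasurableSpace α] {μ : Measure α} [NullSingletonClass μ] {a b : α} (hab : a ≤ b) {S : Set α}
    (hSb : S ⊆ Ioc a b) (hS : ∀ x ∈ S, Ioc a x ⊆ S) :
    ∃ c ∈ Icc a b, S =ᵐ[μ] Ioc a c := by
  rcases S.eq_empty_or_nonempty with rfl | hne
  · exact ⟨a, left_mem_Icc.2 hab, by simp⟩
  have hbdd : BddAbove S := ⟨b, fun x hx ↦ (hSb hx).2⟩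
  have hsub : S ⊆ Ioc a (sSup S) := fun x hx ↦ ⟨(hSb hx).1, le_csSup hbdd hx⟩
  have hsup : Ioo a (sSup S) ⊆ S := fun x hx ↦
    let ⟨c, hc, hxc⟩ := exists_lt_of_lt_csSup hne hx.2
    hS c hc ⟨hx.1, hxc.le⟩
  obtain ⟨x, hx⟩ := hne
  refine ⟨sSup S, ⟨(hsub hx).1.le.trans (hsub hx).2, csSup_le ⟨x, hx⟩ fun y hy ↦ (hSb hy).2⟩, ?_⟩
  exact hsub.eventuallyLE.antisymm (Ioo_ae_eq_Ioc.symm.le.trans hsup.eventuallyLE)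

lemma integral_smul_eq_integral_superlevel {α E : Type*} [MeasurableSpace α] {μ : Measure α}
    [SFinite μ] [NormedAddCommGroup E] [NormedSpace ℝ E] [CompleteSpace E] {w : α → ℝ} {f : α → E}
    {C : ℝ} (hw : AEMeasurable w μ) (hw0 : ∀ᵐ x ∂μ, 0 ≤ w x) (hwC : ∀ᵐ x ∂μ, w x ≤ C)
    (hf : Integrable f μ) :
    ∫ x, w x • f x ∂μ = ∫ y in Ioc 0 C, ∫ x in {x | y < w x}, f x ∂μ := by
  have hsmul : ∀ᵐ x ∂μ, w x • f x = ∫ y in Ioc 0 C, (Iio (w x)).indicator (fun _ ↦ f x) y := by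
    filter_upwards [hw0, hwC] with x hx0 hxC
    have hIoo : Ioc 0 C ∩ Iio (w x) = Ioo 0 (w x) := by
      ext y
      exact ⟨fun hy ↦ ⟨hy.1.1, hy.2⟩, fun hy ↦ ⟨⟨hy.1, hy.2.le.trans hxC⟩, hy.2⟩⟩
    rw [setIntegral_indicator measurableSet_Iio, hIoo]
    simp [hx0]
  have hint : Integrable (fun q : α × ℝ ↦ {q : α × ℝ | q.2 < w q.1}.indicator (fun q ↦ f q.1) q)
      (μ.prod (volume.restrict (Ioc 0 C))) :=
    (hf.comp_fst _).indicator₀ (nullMeasurableSet_lt measurable_snd.aemeasurable hw.comp_fst)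
  calc ∫ x, w x • f x ∂μ
      = ∫ x, (∫ y in Ioc 0 C, (Iio (w x)).indicator (fun _ ↦ f x) y) ∂μ := integral_congr_ae hsmul
    _ = ∫ y in Ioc 0 C, ∫ x, {x | y < w x}.indicator f x ∂μ := integral_integral_swap hint
    _ = ∫ y in Ioc 0 C, ∫ x in {x | y < w x}, f x ∂μ := by
      simp only [integral_indicator₀ (nullMeasurableSet_lt aemeasurable_const hw)]

section Majorization

variable {μ : Measure ℝ} {f g w φ : ℝ → ℝ} {a b : ℝ}

lemma integral_antitoneOn_mul_nonneg [NullSingletonClass μ] [SFinite μ] (hab : a ≤ b)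
    (hw : AntitoneOn w (Icc a b)) (hw0 : ∀ s ∈ Ioc a b, 0 ≤ w s) (hf : IntervalIntegrable f μ a b)
    (h : ∀ x ∈ Ioc a b, 0 ≤ ∫ s in a..x, f s ∂μ) :
    0 ≤ ∫ s in a..b, w s * f s ∂μ := by
  have hwm : AEMeasurable w (μ.restrict (Ioc a b)) :=
    aemeasurable_restrict_of_antitoneOn measurableSet_Ioc (hw.mono Ioc_subset_Icc_self)
  have hwa : ∀ s ∈ Ioc a b, w s ≤ w a := fun s hs ↦
    hw (left_mem_Icc.2 hab) (Ioc_subset_Icc_self hs) hs.1.le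
  have hlayer := integral_smul_eq_integral_superlevel hwm
    (ae_restrict_of_forall_mem measurableSet_Ioc hw0)
    (ae_restrict_of_forall_mem measurableSet_Ioc hwa) hf.1
  simp only [smul_eq_mul] at hlayer
  rw [intervalIntegral.integral_of_le hab, hlayer]
  refine integral_nonneg fun y ↦ ?_
  have hinit : ∀ x ∈ {x | y < w x} ∩ Ioc a b, Ioc a x ⊆ {x | y < w x} ∩ Ioc a b :=
    fun x ⟨hyx, hx⟩ z hz ↦
      have hzb : z ∈ Ioc a b := ⟨hz.1, hz.2.trans hx.2⟩
      ⟨hyx.trans_le (hw (Ioc_subset_Icc_self hzb) (Ioc_subset_Icc_self hx) hz.2), hzb⟩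
  obtain ⟨c, hc, hae⟩ := exists_ae_eq_Ioc_of_forall_Ioc_subset (μ := μ) hab inter_subset_right hinit
  rw [Measure.restrict_restrict₀ (nullMeasurableSet_lt aemeasurable_const hwm),
    setIntegral_congr_set hae, ← intervalIntegral.integral_of_le hc.1]
  rcases hc.1.eq_or_lt with rfl | hac
  · simp
  · exact h c ⟨hac, hc.2⟩

lemma rightDeriv_mul_sub_le_sub_of_convexOn {S : Set ℝ} {x y : ℝ} (hφ : ConvexOn ℝ S φ)
    (hx : x ∈ interior S) (hy : y ∈ S) :
    derivWithin φ (Ioi x) x * (y - x) ≤ φ y - φ x := by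
  rcases lt_trichotomy x y with hxy | rfl | hyx
  · have := hφ.rightDeriv_le_slope_of_mem_interior hx hy hxy
    rwa [slope_def_field, le_div_iff₀ (sub_pos.2 hxy)] at this
  · simp
  · have := (hφ.slope_le_leftDeriv_of_mem_interior hy hx hyx).trans
      (hφ.leftDeriv_le_rightDeriv_of_mem_interior hx)
    rw [slope_def_field, div_le_iff₀ (sub_pos.2 hyx)] at this
    linarith

variable [IsLocallyFiniteMeasure μ]

lemma memLp_restrict_Ioc_of_antitoneOn {q : ENNReal} (hf : AntitoneOn f (Icc a b)) :
    MemLp f q (μ.restrict (Ioc a b)) :=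
  (hf.memLp_isCompact isCompact_Icc).mono_measure (Measure.restrict_mono_set μ Ioc_subset_Icc_self)

variable [NullSingletonClass μ]

theorem integral_comp_le_integral_comp_of_convexOn (hab : a ≤ b) (hφ : ConvexOn ℝ univ φ)
    (hφm : Monotone φ) (hf : AntitoneOn f (Icc a b)) (hg : IntervalIntegrable g μ a b)
    (hφg : IntervalIntegrable (fun s ↦ φ (g s)) μ a b)
    (h : ∀ x ∈ Ioc a b, ∫ s in a..x, f s ∂μ ≤ ∫ s in a..x, g s ∂μ) :
    ∫ s in a..b, φ (f s) ∂μ ≤ ∫ s in a..b, φ (g s) ∂μ := by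
  let w : ℝ → ℝ := fun s ↦ derivWithin φ (Ioi (f s)) (f s)
  have hw : AntitoneOn w (Icc a b) := fun s hs t ht hst ↦
    hφ.monotoneOn_rightDeriv (by simp) (by simp) (hf hs ht hst)
  have hf_int : IntervalIntegrable f μ a b := (hf.mono (uIcc_of_le hab).le).intervalIntegrable
  have hφf : IntervalIntegrable (fun s ↦ φ (f s)) μ a b :=
    ((hφm.comp_antitoneOn hf).mono (uIcc_of_le hab).le).intervalIntegrable
  have hw_sub : IntervalIntegrable (fun s ↦ w s * (g s - f s)) μ a b :=
    (intervalIntegrable_iff_integrableOn_Ioc_of_le hab).2 <| (hg.sub hf_int).1.mul_of_top_right <|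
      memLp_restrict_Ioc_of_antitoneOn hw
  have hnonneg : 0 ≤ ∫ s in a..b, w s * (g s - f s) ∂μ := by
    refine integral_antitoneOn_mul_nonneg hab hw
      (fun s _ ↦ (hφm.monotoneOn _).derivWithin_nonneg) (hg.sub hf_int) fun x hx ↦ ?_
    have hsub : uIcc a x ⊆ uIcc a b :=
      uIcc_subset_uIcc_left (by simp [uIcc_of_le hab, hx.1.le, hx.2])
    rw [intervalIntegral.integral_sub (hg.mono_set hsub) (hf_int.mono_set hsub)]
    exact sub_nonneg.2 (h x hx)
  rw [← sub_nonneg, ← intervalIntegral.integral_sub hφg hφf]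
  exact hnonneg.trans <| intervalIntegral.integral_mono_on hab hw_sub (hφg.sub hφf)
    fun s _ ↦ rightDeriv_mul_sub_le_sub_of_convexOn hφ (by simp) (mem_univ (g s))

lemma monotone_max_zero_rpow {p : ℝ} (hp : 0 ≤ p) : Monotone fun x : ℝ ↦ max x 0 ^ p :=
  fun _ _ hxy ↦ Real.rpow_le_rpow (le_max_right _ _) (max_le_max_right 0 hxy) hp

lemma convexOn_max_zero_rpow {p : ℝ} (hp : 1 ≤ p) :
    ConvexOn ℝ univ fun x : ℝ ↦ max x 0 ^ p := by
  have hrange : (fun x : ℝ ↦ max x 0) '' univ = Ici 0 := by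
    ext y
    exact ⟨by rintro ⟨x, -, rfl⟩; exact le_max_right x 0, fun hy ↦ ⟨y, trivial, max_eq_left hy⟩⟩
  refine ConvexOn.comp (g := fun x : ℝ ↦ x ^ p) (f := fun x ↦ max x 0) ?_
    ((convexOn_id convex_univ).sup (convexOn_const 0 convex_univ)) ?_ <;> rw [hrange]
  · exact convexOn_rpow hp
  · exact Real.monotoneOn_rpow_Ici_of_exponent_nonneg (zero_le_one.trans hp)

theorem integral_rpow_le_integral_rpow {p : ℝ} (hab : a ≤ b) (hp : 1 ≤ p)
    (hf0 : ∀ s ∈ Ioc a b, 0 ≤ f s) (hf : AntitoneOn f (Icc a b)) (hg0 : ∀ s ∈ Ioc a b, 0 ≤ g s)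
    (hg : MemLp g (ENNReal.ofReal p) (μ.restrict (Ioc a b)))
    (h : ∀ x ∈ Ioc a b, ∫ s in a..x, f s ∂μ ≤ ∫ s in a..x, g s ∂μ) :
    ∫ s in a..b, f s ^ p ∂μ ≤ ∫ s in a..b, g s ^ p ∂μ := by
  have hp0 : 0 ≤ p := zero_le_one.trans hp
  have : IsFiniteMeasure (μ.restrict (Ioc a b)) :=
    isFiniteMeasure_restrict.2 measure_Ioc_lt_top.ne
  have hg_int : IntervalIntegrable g μ a b :=
    (intervalIntegrable_iff_integrableOn_Ioc_of_le hab).2 (hg.integrable (by simpa using hp))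
  have hgp : IntervalIntegrable (fun s ↦ max (g s) 0 ^ p) μ a b := by
    rw [intervalIntegrable_iff_integrableOn_Ioc_of_le hab]
    refine IntegrableOn.congr_fun hg.integrable_norm_rpow' (fun s hs ↦ ?_) measurableSet_Ioc
    simp [hp0, hg0 s hs, abs_of_nonneg]
  have hmax {u : ℝ → ℝ} (hu : ∀ s ∈ Ioc a b, 0 ≤ u s) :
      ∫ s in a..b, max (u s) 0 ^ p ∂μ = ∫ s in a..b, u s ^ p ∂μ :=
    intervalIntegral.integral_congr_Ioo_of_le hab fun s hs ↦ by
      simp only [max_eq_left (hu s (Ioo_subset_Ioc_self hs))]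
  have := integral_comp_le_integral_comp_of_convexOn hab (convexOn_max_zero_rpow hp)
    (monotone_max_zero_rpow hp0) hf hg_int hgp h
  rwa [hmax hf0, hmax hg0] at this

theorem pow_submajorization_general {K p : ℝ} (hab : a ≤ b) (hK : 0 ≤ K) (hp : 1 ≤ p)
    (hf0 : ∀ s ∈ Ioc a b, 0 ≤ f s) (hf : AntitoneOn f (Icc a b)) (hg0 : ∀ s ∈ Ioc a b, 0 ≤ g s)
    (hg : MemLp g (ENNReal.ofReal p) (μ.restrict (Ioc a b)))
    (h : ∀ x ∈ Ioc a b, ∫ s in a..x, f s ∂μ ≤ K * ∫ s in a..x, g s ∂μ) :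
    ∫ s in a..b, f s ^ p ∂μ ≤ K ^ p * ∫ s in a..b, g s ^ p ∂μ :=
  calc ∫ s in a..b, f s ^ p ∂μ
      ≤ ∫ s in a..b, (K * g s) ^ p ∂μ :=
        integral_rpow_le_integral_rpow hab hp hf0 hf (fun s hs ↦ mul_nonneg hK (hg0 s hs))
          (hg.const_mul K) (by simpa only [intervalIntegral.integral_const_mul] using h)
    _ = ∫ s in a..b, K ^ p * g s ^ p ∂μ :=
        intervalIntegral.integral_congr_Ioo_of_le hab fun s hs ↦
          Real.mul_rpow hK (hg0 s (Ioo_subset_Ioc_self hs))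
    _ = K ^ p * ∫ s in a..b, g s ^ p ∂μ := intervalIntegral.integral_const_mul _ _

end Majorization

lemma antitoneOn_one_div_one_add : AntitoneOn (fun s : ℝ ↦ 1 / (1 + s)) (Ioi (-1)) :=
  fun _ hs _ _ hst ↦ one_div_le_one_div_of_le (neg_lt_iff_pos_add'.1 hs) (by gcongr)

/-- **Hardy–Littlewood–Pólya type estimate (Lemma 10.1).**
If `μ : [0,∞) → [0,∞)` is nonincreasing and `∫₀^t μ(s) ds ≤ K ∫₀^t ds/(1+s)` for all
`t > 0`, then for every real `p ≥ 1` and every `t > 0`,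
`∫₀^t μ(s)^p ds ≤ K^p ∫₀^t ds/(1+s)^p`. -/
theorem pow_submajorization (μ : ℝ → ℝ)
    (hμ0 : ∀ s : ℝ, 0 ≤ s → 0 ≤ μ s) (hmono : AntitoneOn μ (Set.Ici 0))
    (K : ℝ) (hK : 0 < K)
    (h : ∀ t : ℝ, 0 < t →
      (∫ s in (0:ℝ)..t, μ s) ≤ K * ∫ s in (0:ℝ)..t, 1 / (1 + s)) :
    ∀ p : ℝ, 1 ≤ p → ∀ t : ℝ, 0 < t →
      (∫ s in (0:ℝ)..t, μ s ^ p) ≤ K ^ p * ∫ s in (0:ℝ)..t, (1 / (1 + s)) ^ p := by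
  intro p hp t ht
  exact pow_submajorization_general ht.le hK.le hp (fun s hs ↦ hμ0 s hs.1.le)
    (hmono.mono Icc_subset_Ici_self) (fun s hs ↦ by have := hs.1; positivity)
    (memLp_restrict_Ioc_of_antitoneOn <| antitoneOn_one_div_one_add.mono fun s hs ↦
      neg_one_lt_zero.trans_le hs.1)
    fun x hx ↦ h x hx.1
end

section
/- Let μ : [0,∞) → [0,∞) be nonincreasing and let K > 0 satisfy ∫₀^t μ(s) ds ≤ K·log(1+t) for all t > 0. Then for every C > K there exists t₀ > 0 such that for all t ≥ t₀ the Lebesgue measure of the set {s ≥ 0 : μ(s) > 1/t} is at most C·t·log t. -/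
/-!
If a nonincreasing `μ` exceeds `u` at some point `s ≥ S`, it exceeds `u` on all of `[0, S]`, so that
`S * u ≤ ∫ s in 0..S, μ s`. Hence `∫ s in 0..S, μ s < S * u` confines `{s ≥ 0 : μ s > u}` to
`[0, S)`. Take `u = 1 / t` and `S = C * t * log t`: the integral is at most `K * log (1 + S)`, and
`log (1 + S) ∼ log t`, so it is eventually smaller than `S * u = C * log t` because `K < C`.
-/

open MeasureTheory

open Asymptotics Filter Set

theorem sub_mul_le_integral_of_antitoneOn {f : ℝ → ℝ} {a b : ℝ} (hab : a ≤ b)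
    (hf : AntitoneOn f (Icc a b)) : (b - a) * f b ≤ ∫ x in a..b, f x := by
  have hint : IntervalIntegrable f volume a b :=
    AntitoneOn.intervalIntegrable (by rwa [uIcc_of_le hab])
  calc
    (b - a) * f b = ∫ _ in a..b, f b := by rw [intervalIntegral.integral_const, smul_eq_mul]
    _ ≤ ∫ x in a..b, f x :=
      intervalIntegral.integral_mono_on hab intervalIntegrable_const hint fun _ hx =>
        hf hx (right_mem_Icc.2 hab) hx.2

theorem superlevel_subset_Ico_of_integral_lt {f : ℝ → ℝ} {a b u : ℝ} (hab : a ≤ b)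
    (hf : AntitoneOn f (Ici a)) (hint : ∫ x in a..b, f x < (b - a) * u) :
    {x | a ≤ x ∧ u < f x} ⊆ Ico a b := by
  rintro x ⟨hax, hux⟩
  refine ⟨hax, lt_of_not_ge fun hbx => hint.not_ge ?_⟩
  have hu : u ≤ f b := hux.le.trans (hf hab hax hbx)
  calc
    (b - a) * u ≤ (b - a) * f b := mul_le_mul_of_nonneg_left hu (sub_nonneg.2 hab)
    _ ≤ ∫ x in a..b, f x := sub_mul_le_integral_of_antitoneOn hab (hf.mono Icc_subset_Ici_self)

theorem volume_superlevel_le_of_integral_lt {f : ℝ → ℝ} {a b u : ℝ} (hab : a ≤ b)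
    (hf : AntitoneOn f (Ici a)) (hint : ∫ x in a..b, f x < (b - a) * u) :
    volume {x | a ≤ x ∧ u < f x} ≤ ENNReal.ofReal (b - a) :=
  (measure_mono (superlevel_subset_Ico_of_integral_lt hab hf hint)).trans_eq Real.volume_Ico

theorem eventually_mul_lt_mul_of_isEquivalent {α : Type*} {l : Filter α} {f g : α → ℝ} {K C : ℝ}
    (hfg : f ~[l] g) (hg : ∀ᶠ x in l, 0 < g x) (hKC : K < C) :
    ∀ᶠ x in l, K * f x < C * g x := by
  have hratio : Tendsto (f / g) l (nhds 1) :=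
    (isEquivalent_iff_tendsto_one (hg.mono fun _ hx => hx.ne')).1 hfg
  have hlt : ∀ᶠ x in l, K * (f x / g x) < C :=
    (hratio.const_mul K).eventually_lt_const (by rwa [mul_one])
  filter_upwards [hlt, hg] with x hx hgx
  rwa [← mul_div_assoc, div_lt_iff₀ hgx] at hx

theorem tendsto_const_mul_mul_log_atTop {c : ℝ} (hc : 0 < c) :
    Tendsto (fun t => c * t * Real.log t) atTop atTop :=
  (tendsto_id.const_mul_atTop hc).atTop_mul_atTop₀ Real.tendsto_log_atTop

theorem isEquivalent_log_const_mul_mul_log {c : ℝ} (hc : 0 < c) :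
    (fun t => Real.log (c * t * Real.log t)) ~[atTop] Real.log := by
  have hloglog : (fun t => Real.log (Real.log t)) =o[atTop] Real.log :=
    Real.isLittleO_log_id_atTop.comp_tendsto Real.tendsto_log_atTop
  have hsum : (fun t => Real.log t + (Real.log c + Real.log (Real.log t))) ~[atTop] Real.log :=
    IsEquivalent.refl.add_isLittleO (Real.isLittleO_const_log_atTop.add hloglog)
  refine EventuallyEq.trans_isEquivalent ?_ hsum
  filter_upwards [eventually_gt_atTop 1] with t ht
  have ht0 : 0 < t := zero_lt_one.trans ht
  rw [Real.log_mul (mul_pos hc ht0).ne' (Real.log_pos ht).ne', Real.log_mul hc.ne' ht0.ne']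
  ring

theorem isEquivalent_log_const_add_const_mul_mul_log (a : ℝ) {c : ℝ} (hc : 0 < c) :
    (fun t => Real.log (a + c * t * Real.log t)) ~[atTop] Real.log := by
  have htop := tendsto_const_mul_mul_log_atTop hc
  have hadd : (fun t => a + c * t * Real.log t) ~[atTop] fun t => c * t * Real.log t :=
    IsEquivalent.refl.const_add_of_norm_tendsto_atTop (tendsto_norm_atTop_atTop.comp htop)
  exact (hadd.log htop).trans (isEquivalent_log_const_mul_mul_log hc)

theorem distribution_function_estimate_general {μ : ℝ → ℝ} (hμ : AntitoneOn μ (Ici 0)) {K C : ℝ}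
    (hC : 0 < C) (hKC : K < C)
    (hint : ∀ᶠ t in atTop, ∫ s in (0 : ℝ)..t, μ s ≤ K * Real.log (1 + t)) :
    ∀ᶠ t in atTop,
      volume {s : ℝ | 0 ≤ s ∧ 1 / t < μ s} ≤ ENNReal.ofReal (C * t * Real.log t) := by
  have hlog : ∀ᶠ t in atTop, K * Real.log (1 + C * t * Real.log t) < C * Real.log t :=
    eventually_mul_lt_mul_of_isEquivalent (isEquivalent_log_const_add_const_mul_mul_log 1 hC)
      (Real.tendsto_log_atTop.eventually_gt_atTop 0) hKC
  have htop := tendsto_const_mul_mul_log_atTop hC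
  filter_upwards [hlog, htop.eventually hint, htop.eventually_ge_atTop 0, eventually_gt_atTop 0]
    with t hlogt hintt hS ht
  have hlt : ∫ s in (0 : ℝ)..C * t * Real.log t, μ s < (C * t * Real.log t - 0) * (1 / t) :=
    calc
      _ ≤ K * Real.log (1 + C * t * Real.log t) := hintt
      _ < C * Real.log t := hlogt
      _ = (C * t * Real.log t - 0) * (1 / t) := by field_simp; ring
  simpa only [sub_zero] using volume_superlevel_le_of_integral_lt hS hμ hlt

/-- **Distribution function estimate (Lemma 10.4).**
If `μ : [0,∞) → [0,∞)` is nonincreasing and `∫₀^t μ(s) ds ≤ K·log(1+t)` for all `t > 0`,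
then for every `C > K` one eventually has
`|{s ≥ 0 : μ(s) > 1/t}| ≤ C·t·log t`. -/
theorem distribution_function_estimate (μ : ℝ → ℝ)
    (hμ0 : ∀ s : ℝ, 0 ≤ s → 0 ≤ μ s) (hmono : AntitoneOn μ (Set.Ici 0))
    (K : ℝ) (hK : 0 < K)
    (h : ∀ t : ℝ, 0 < t → (∫ s in (0:ℝ)..t, μ s) ≤ K * Real.log (1 + t)) :
    ∀ C : ℝ, K < C → ∃ t₀ : ℝ, 0 < t₀ ∧ ∀ t : ℝ, t₀ ≤ t →
      volume {s : ℝ | 0 ≤ s ∧ 1 / t < μ s} ≤ ENNReal.ofReal (C * t * Real.log t) := by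
  intro C hKC
  have hbound := distribution_function_estimate_general hmono (hK.trans hKC) hKC
    ((eventually_gt_atTop 0).mono h)
  obtain ⟨t₀, ht₀⟩ := (hbound.and (eventually_gt_atTop 0)).exists_forall_of_atTop
  exact ⟨t₀, (ht₀ t₀ le_rfl).2, fun t ht => (ht₀ t ht).1⟩
end
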